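/- Let n ≥ 1 be an integer, 0 < s < 1, 1 ≤ p < ∞, and let u : ℝⁿ → ℝ be a measurable function that is 2π-periodic in the variable x₁ and has finite periodic Gagliardo seminorm [u]^{per}_{W^{s,p}}. Then [u^{*per}]^{per}_{W^{s,p}} ≤ [u]^{per}_{W^{s,p}}. -/

import Mathlib

open MeasureTheory Real
open scoped ENNReal

/-- For a measurable set `A ⊂ ℝ` of finite measure, `A^* := (−|A|/2, |A|/2)`. -/
noncomputable def symmSet (A : Set ℝ) : Set ℝ :=
  Set.Ioo (-((volume A).toReal / 2)) ((volume A).toReal / 2)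

/-- Symmetric decreasing rearrangement of a (nonnegative) function on `(−π,π)`:
`u^*(x) := ∫₀^∞ χ_{{u>t}^*}(x) dt`. -/
noncomputable def symmRearr (u : ℝ → ℝ) : ℝ → ℝ := fun x =>
  ∫ t in Set.Ioi (0 : ℝ),
    (symmSet {y | y ∈ Set.Ioo (-π) π ∧ t < u y}).indicator (fun _ => (1 : ℝ)) x

/-- The `2π`-periodic extension of (the restriction to `[−π,π)` of) a function. -/
noncomputable def periodize (f : ℝ → ℝ) : ℝ → ℝ := fun x =>
  f (x - 2 * π * (⌊(x + π) / (2 * π)⌋ : ℝ))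

/-- The periodic rearrangement `f^{*per}`: the `2π`-periodic extension of `(f·χ_{(−π,π)})^*`. -/
noncomputable def perRearr (f : ℝ → ℝ) : ℝ → ℝ := periodize (symmRearr f)
/-- `([u]^{per}_{W^{s,p}})^p`, the `p`-th power of the periodic Gagliardo seminorm on
`ℝⁿ = ℝ × ℝ^{n−1}` (so `n = m + 1`), for a function which is `2π`-periodic in the first
variable. -/
noncomputable def gagP (m : ℕ) (s p : ℝ) (u : ℝ × EuclideanSpace ℝ (Fin m) → ℝ) : ℝ≥0∞ :=
  ∫⁻ x in {x : ℝ × EuclideanSpace ℝ (Fin m) | x.1 ∈ Set.Ioo (-π) π},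
    ∫⁻ y : ℝ × EuclideanSpace ℝ (Fin m),
      ENNReal.ofReal (|u x - u y| ^ p /
        Real.sqrt ((x.1 - y.1) ^ 2 + ‖x.2 - y.2‖ ^ 2) ^ ((m : ℝ) + 1 + s * p))

/-- The periodic Gagliardo seminorm `[u]^{per}_{W^{s,p}}`. -/
noncomputable def gagSeminorm (m : ℕ) (s p : ℝ) (u : ℝ × EuclideanSpace ℝ (Fin m) → ℝ) :
    ℝ≥0∞ :=
  gagP m s p u ^ (1 / p)
/-- The periodic rearrangement in the first variable:
`u^{*per}(x₁,x') := (|u(·,x')|)^{*per}(x₁)`. -/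
noncomputable def perRearr1 (m : ℕ) (u : ℝ × EuclideanSpace ℝ (Fin m) → ℝ) :
    ℝ × EuclideanSpace ℝ (Fin m) → ℝ := fun x =>
  perRearr (fun t => |u (t, x.2)|) x.1
/-! ### Part 1: the periodised Gaussian is an increasing function of the cosine -/
section Theta
open HurwitzZeta

lemma ek_double (a : ℝ) {x : ℝ} (hx : 0 < x) :
    evenKernel (a : UnitAddCircle) x ^ 2 =
      evenKernel ((0 : ℝ) : UnitAddCircle) (2 * x) * evenKernel (a : UnitAddCircle) (2 * x) +
      evenKernel ((1 / 2 : ℝ) : UnitAddCircle) (2 * x) *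
        evenKernel ((a + 1 / 2 : ℝ) : UnitAddCircle) (2 * x) := by
  have h2x : 0 < 2 * x := by positivity
  have h1 := hasSum_int_evenKernel a hx
  have hS : HasSum (fun q : ℤ × ℤ => rexp (-π * (q.1 + a) ^ 2 * x) * rexp (-π * (q.2 + a) ^ 2 * x))
      (evenKernel (a : UnitAddCircle) x * evenKernel (a : UnitAddCircle) x) :=
    h1.mul h1 (h1.summable.mul_of_nonneg h1.summable (fun _ => by positivity)
      (fun _ => by positivity))
  -- reindexing `(m, n) = (m, m - (2 e + i))`
  let φ : (ℤ × Fin 2) × ℤ ≃ ℤ × ℤ :=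
    { toFun := fun q => (q.2, q.2 - (2 * q.1.1 + (q.1.2 : ℕ)))
      invFun := fun q => (((q.1 - q.2) / 2, if (q.1 - q.2) % 2 = 0 then 0 else 1), q.1)
      left_inv := by
        rintro ⟨⟨e, i⟩, m⟩
        fin_cases i
        · simp
        · simp; omega
      right_inv := by
        rintro ⟨m, n⟩
        by_cases h : (m - n) % 2 = 0
        · simp [h]; omega
        · simp [h]; omega }
  have hS2 := (φ.hasSum_iff).2 hS
  have hfib : ∀ q : ℤ × Fin 2, HasSum (fun m : ℤ =>
      ((fun q : ℤ × ℤ => rexp (-π * (q.1 + a) ^ 2 * x) * rexp (-π * (q.2 + a) ^ 2 * x)) ∘ φ) (q, m))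
      (rexp (-π * (q.1 + (((q.2 : ℕ) : ℝ) / 2)) ^ 2 * (2 * x)) *
        evenKernel ((a + ((q.2 : ℕ) : ℝ) / 2 : ℝ) : UnitAddCircle) (2 * x)) := by
    rintro ⟨e, i⟩
    have hper : ((a + ((i : ℕ) : ℝ) / 2 : ℝ) : UnitAddCircle) =
        ((a - (e + ((i : ℕ) : ℝ) / 2) : ℝ) : UnitAddCircle) := by
      have : (a + ((i : ℕ) : ℝ) / 2 : ℝ) =
        (a - (e + ((i : ℕ) : ℝ) / 2) : ℝ) + ((e + (i : ℕ) : ℤ) : ℝ) := by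
        push_cast; ring
      rw [this, AddCircle.coe_add]
      have h0 : (((e + (i : ℕ) : ℤ) : ℝ) : UnitAddCircle) = 0 := by
        rw [AddCircle.coe_eq_zero_iff]
        exact ⟨e + (i : ℕ), by simp⟩
      rw [h0, add_zero]
    simp only
    rw [hper]
    have := (hasSum_int_evenKernel (a - (e + ((i : ℕ) : ℝ) / 2)) h2x).mul_left
      (rexp (-π * (e + (((i : ℕ) : ℝ) / 2)) ^ 2 * (2 * x)))
    refine this.congr_fun fun m => ?_
    simp only [Function.comp, φ, Equiv.coe_fn_mk]
    rw [← Real.exp_add, ← Real.exp_add]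
    congr 1
    push_cast
    ring
  have hS3 := hS2.prod_fiberwise hfib
  have hS4 := ((Equiv.prodComm (Fin 2) ℤ).hasSum_iff).2 hS3
  have hfib2 : ∀ i : Fin 2, HasSum (fun e : ℤ =>
      ((fun q : ℤ × Fin 2 => (rexp (-π * (q.1 + (((q.2 : ℕ) : ℝ) / 2)) ^ 2 * (2 * x)) *
        evenKernel ((a + ((q.2 : ℕ) : ℝ) / 2 : ℝ) : UnitAddCircle) (2 * x))) ∘
          (Equiv.prodComm (Fin 2) ℤ)) (i, e))
      (evenKernel ((((i : ℕ) : ℝ) / 2 : ℝ) : UnitAddCircle) (2 * x) *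
        evenKernel ((a + ((i : ℕ) : ℝ) / 2 : ℝ) : UnitAddCircle) (2 * x)) := by
    intro i
    exact (hasSum_int_evenKernel (((i : ℕ) : ℝ) / 2) h2x).mul_right _
  have hS5 := hS4.prod_fiberwise hfib2
  have := hS5.unique (hasSum_fintype _)
  rw [sq, this]
  simp [Fin.sum_univ_two]

lemma abs_sin_nat_mul (n : ℕ) (x : ℝ) : |Real.sin (n * x)| ≤ n * |Real.sin x| := by
  induction n with
  | zero => simp
  | succ k ih =>
    push_cast
    rw [add_mul, one_mul, Real.sin_add]
    calc _ ≤ |Real.sin (k * x) * Real.cos x| + |Real.cos (k * x) * Real.sin x| := abs_add_le _ _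
      _ ≤ |Real.sin (k * x)| * 1 + 1 * |Real.sin x| := by
        rw [abs_mul, abs_mul]
        gcongr
        · exact Real.abs_cos_le_one _
        · exact Real.abs_cos_le_one _
      _ ≤ _ := by linarith

lemma cos_nat_mul_sub (n : ℕ) (x y : ℝ) (h : Real.cos x ≤ Real.cos y) :
    Real.cos (n * x) - Real.cos (n * y) ≤ n ^ 2 * (Real.cos y - Real.cos x) := by
  have h1 : Real.cos y - Real.cos x = |Real.cos x - Real.cos y| := by
    rw [abs_sub_comm, abs_of_nonneg]; linarith
  rw [h1]
  refine (le_abs_self _).trans ?_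
  rw [Real.cos_sub_cos, Real.cos_sub_cos]
  have e1 : ((n:ℝ) * x + n * y) / 2 = n * ((x + y) / 2) := by ring
  have e2 : ((n:ℝ) * x - n * y) / 2 = n * ((x - y) / 2) := by ring
  rw [e1, e2]
  simp only [abs_mul, abs_neg]
  have := abs_sin_nat_mul n ((x + y) / 2)
  have h3 := abs_sin_nat_mul n ((x - y) / 2)
  have h4 := mul_le_mul this h3 (abs_nonneg _) (by positivity)
  have : |(2:ℝ)| = 2 := by norm_num
  rw [this]
  nlinarith

lemma nat_sq_le_four_pow (n : ℕ) : ((n : ℝ) + 1) ^ 2 ≤ 4 ^ n := by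
  induction n with
  | zero => simp
  | succ k ih =>
    rw [pow_succ (4:ℝ)]; push_cast
    have : (0:ℝ) ≤ k := by positivity
    nlinarith

/-- base case -/
lemma ck_mono {y : ℝ} (hy : 1 ≤ y) (a b : ℝ) (h : Real.cos (2 * π * a) ≤ Real.cos (2 * π * b)) :
    cosKernel (a : UnitAddCircle) y ≤ cosKernel (b : UnitAddCircle) y := by
  have hy0 : 0 < y := by linarith
  have ha := (hasSum_nat_cosKernel₀ a hy0)
  have hb := (hasSum_nat_cosKernel₀ b hy0)
  have hab := ha.sub hb
  set D := Real.cos (2 * π * b) - Real.cos (2 * π * a) with hD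
  have hD0 : 0 ≤ D := by rw [hD]; linarith
  set q := rexp (-π * y) with hq
  have hq0 : 0 < q := Real.exp_pos _
  have hq1 : q ≤ 1 / 2 := by
    have h1 : q ≤ rexp (-1) := by
      apply Real.exp_le_exp.2
      nlinarith [Real.pi_gt_three]
    have := Real.exp_neg_one_lt_half
    linarith
  -- dominating series
  have hgeo : HasSum (fun n : ℕ => 2 * q * D * (1 / 2 : ℝ) ^ n) (2 * q * D * 2) := by
    have := hasSum_geometric_two
    exact this.mul_left _
  have hgeo' := (hasSum_nat_add_iff' 1).2 hgeo
  have hab' := (hasSum_nat_add_iff' 1).2 hab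
  have hterm : ∀ n : ℕ, rexp (-π * ((n:ℝ) + 1) ^ 2 * y) = q ^ ((n + 1) ^ 2) := by
    intro n
    rw [hq, ← Real.exp_nat_mul]
    congr 1
    push_cast; ring
  have hle := hasSum_le (fun n : ℕ => ?_) hab' hgeo'
  · simp only [Finset.sum_range_one] at hle
    have h0 : rexp (-π * (((0:ℕ):ℝ) + 1) ^ 2 * y) = q := by simp [hq]
    rw [h0] at hle
    have e1 : Real.cos (2 * π * a * (((0:ℕ):ℝ) + 1)) = Real.cos (2 * π * a) := by simp
    have e2 : Real.cos (2 * π * b * (((0:ℕ):ℝ) + 1)) = Real.cos (2 * π * b) := by simp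
    rw [e1, e2] at hle
    simp only [pow_zero, mul_one] at hle
    have : 2 * Real.cos (2 * π * a) * q - 2 * Real.cos (2 * π * b) * q = - (2 * q * D) := by
      rw [hD]; ring
    rw [this] at hle
    linarith
  · have hc := cos_nat_mul_sub (n + 2) (2 * π * a) (2 * π * b) h
    rw [hterm]
    have e1 : (2 * π * a * (((n + 1 : ℕ):ℝ) + 1)) = ((n + 2 : ℕ):ℝ) * (2 * π * a) := by
      push_cast; ring
    have e2 : (2 * π * b * (((n + 1 : ℕ):ℝ) + 1)) = ((n + 2 : ℕ):ℝ) * (2 * π * b) := by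
      push_cast; ring
    rw [e1, e2]
    have hq2 : q ^ ((n + 1 + 1) ^ 2) ≤ q * (1 / 8) ^ (n + 1) := by
      calc q ^ ((n + 1 + 1) ^ 2) ≤ q ^ (1 + 3 * (n + 1)) := by
            apply pow_le_pow_of_le_one hq0.le (by linarith)
            nlinarith
        _ = q * (q ^ 3) ^ (n + 1) := by rw [pow_add, pow_mul, pow_one]
        _ ≤ q * (1 / 8) ^ (n + 1) := by
          gcongr
          calc q ^ 3 ≤ (1 / 2) ^ 3 := by gcongr
            _ = 1 / 8 := by norm_num
    have h4 := nat_sq_le_four_pow (n + 1)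
    have e4 : (((n + 1 : ℕ):ℝ) + 1) = ((n + 2 : ℕ):ℝ) := by push_cast; ring
    rw [e4] at h4
    calc _ = 2 * (Real.cos (((n + 2 : ℕ):ℝ) * (2 * π * a)) - Real.cos (((n + 2 : ℕ):ℝ) * (2 * π * b)))
            * q ^ ((n + 1 + 1) ^ 2) := by ring
      _ ≤ 2 * (4 ^ (n + 1) * D) * (q * (1 / 8) ^ (n + 1)) := by
          have : Real.cos (((n + 2 : ℕ):ℝ) * (2 * π * a)) - Real.cos (((n + 2 : ℕ):ℝ) * (2 * π * b))
              ≤ 4 ^ (n + 1) * D := hc.trans (by gcongr)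
          gcongr
      _ = 2 * q * D * ((4 : ℝ) ^ (n + 1) * (1 / 8) ^ (n + 1)) := by ring
      _ = 2 * q * D * (1 / 2) ^ (n + 1) := by
          rw [← mul_pow]; norm_num

lemma ek_nonneg (a : ℝ) {x : ℝ} (hx : 0 < x) : 0 ≤ evenKernel (a : UnitAddCircle) x :=
  (hasSum_int_evenKernel a hx).nonneg (fun _ => by positivity)

lemma ek_half_lt {x : ℝ} (hx : 0 < x) : evenKernel ((1 / 2 : ℝ) : UnitAddCircle) x <
    evenKernel ((0 : ℝ) : UnitAddCircle) x := by
  rw [evenKernel_functional_equation, evenKernel_functional_equation]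
  have hx' : 0 < 1 / x := by positivity
  have : cosKernel ((1 / 2 : ℝ) : UnitAddCircle) (1 / x) < cosKernel ((0 : ℝ) : UnitAddCircle) (1 / x) := by
    have h1 := hasSum_nat_cosKernel₀ (1 / 2) hx'
    have h2 := hasSum_nat_cosKernel₀ 0 hx'
    have := hasSum_lt (i := 0) (fun n => ?_) ?_ h1 h2
    · linarith
    · simp only [mul_zero, zero_mul, Real.cos_zero]
      gcongr
      exact Real.cos_le_one _
    · have e : (2 * π * (1 / 2) * (((0:ℕ):ℝ) + 1)) = π := by push_cast; ring
      rw [e]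
      simp only [mul_zero, zero_mul, Real.cos_zero, Real.cos_pi]
      gcongr
      norm_num
  gcongr

lemma ek_mono_aux (k : ℕ) : ∀ x : ℝ, 0 < x → x ≤ 2 ^ k → ∀ a b : ℝ,
    Real.cos (2 * π * a) ≤ Real.cos (2 * π * b) →
    evenKernel (a : UnitAddCircle) x ≤ evenKernel (b : UnitAddCircle) x := by
  induction k with
  | zero =>
    intro x hx hx1 a b h
    rw [evenKernel_functional_equation, evenKernel_functional_equation]
    have := ck_mono (y := 1 / x) (by rw [le_div_iff₀ hx]; simpa using hx1) a b h
    gcongr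
  | succ k ih =>
    intro x' hx' hxk a b h
    obtain ⟨x, rfl⟩ : ∃ x, x' = 2 * x := ⟨x' / 2, by ring⟩
    have hx : 0 < x := by linarith
    have hxk : x ≤ 2 ^ k := by rw [pow_succ] at hxk; linarith
    have i1 := ih x hx hxk a b h
    have i2 := ih x hx hxk (b + 1 / 2) (a + 1 / 2) (by
      have e1 : 2 * π * (b + 1 / 2) = 2 * π * b + π := by ring
      have e2 : 2 * π * (a + 1 / 2) = 2 * π * a + π := by ring
      rw [e1, e2, Real.cos_add_pi, Real.cos_add_pi]; linarith)
    have hp : ∀ a : ℝ, evenKernel ((a + 1 / 2 + 1 / 2 : ℝ) : UnitAddCircle) (2 * x) =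
        evenKernel (a : UnitAddCircle) (2 * x) := by
      intro a
      have : (a + 1 / 2 + 1 / 2 : ℝ) = a + 1 := by ring
      rw [this, AddCircle.coe_add_period]
    have da := ek_double a hx
    have db := ek_double b hx
    have da' := ek_double (a + 1 / 2) hx
    have db' := ek_double (b + 1 / 2) hx
    rw [hp] at da' db'
    have hc := ek_half_lt hx'
    have hc1 := ek_nonneg (1 / 2) hx'
    have n1 := ek_nonneg a hx
    have n2 := ek_nonneg (b + 1 / 2) hx
    have s1 := pow_le_pow_left₀ n1 i1 2
    have s2 := pow_le_pow_left₀ n2 i2 2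
    set c0 := evenKernel ((0 : ℝ) : UnitAddCircle) (2 * x)
    set c1 := evenKernel ((1 / 2 : ℝ) : UnitAddCircle) (2 * x)
    set Ea := evenKernel (a : UnitAddCircle) (2 * x)
    set Eb := evenKernel (b : UnitAddCircle) (2 * x)
    set Ea' := evenKernel ((a + 1 / 2 : ℝ) : UnitAddCircle) (2 * x)
    set Eb' := evenKernel ((b + 1 / 2 : ℝ) : UnitAddCircle) (2 * x)
    rw [da, db] at s1
    rw [da', db'] at s2
    have hc0 : 0 < c0 := by linarith
    have t1 := mul_le_mul_of_nonneg_left s1 hc0.le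
    have t2 := mul_le_mul_of_nonneg_left s2 hc1
    have : (c0 - c1) * (c0 + c1) * Ea ≤ (c0 - c1) * (c0 + c1) * Eb := by nlinarith
    exact le_of_mul_le_mul_left this (by apply mul_pos <;> linarith)

/-- the periodised Gaussian -/
noncomputable def thetaK (t z : ℝ) : ℝ := evenKernel ((z / (2 * π) : ℝ) : UnitAddCircle) (4 * π * t)

lemma thetaK_hasSum {t : ℝ} (ht : 0 < t) (z : ℝ) :
    HasSum (fun k : ℤ => rexp (-t * (z + 2 * π * k) ^ 2)) (thetaK t z) := by
  have h := hasSum_int_evenKernel (z / (2 * π)) (t := 4 * π * t) (by positivity)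
  refine h.congr_fun fun k => ?_
  congr 1
  have := Real.pi_pos
  field_simp
  ring

lemma thetaK_mono {t : ℝ} (ht : 0 < t) {x y : ℝ} (h : Real.cos x ≤ Real.cos y) :
    thetaK t x ≤ thetaK t y := by
  have hx : 0 < 4 * π * t := by positivity
  obtain ⟨k, hk⟩ := pow_unbounded_of_one_lt (4 * π * t) (one_lt_two)
  refine ek_mono_aux k _ hx hk.le _ _ ?_
  have := Real.pi_pos
  rw [mul_div_cancel₀ _ (by positivity), mul_div_cancel₀ _ (by positivity)]
  exact h

lemma thetaK_nonneg {t : ℝ} (ht : 0 < t) (z : ℝ) : 0 ≤ thetaK t z :=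
  ek_nonneg _ (by positivity)

lemma thetaK_continuous {t : ℝ} (ht : 0 < t) : Continuous (thetaK t) := by
  have hx : 0 < 4 * π * t := by positivity
  rw [continuous_iff_continuousAt]
  intro z
  have key : Continuous (fun z : ℝ => (thetaK t z : ℂ)) := by
    unfold thetaK
    simp_rw [evenKernel_def]
    rw [continuous_iff_continuousAt]
    intro z
    refine ContinuousAt.mul (by fun_prop) ?_
    have h1 := (differentiableAt_jacobiTheta₂_fst
      (((z / (2 * π) : ℝ) : ℂ) * Complex.I * ((4 * π * t : ℝ) : ℂ))
      (τ := Complex.I * ((4 * π * t : ℝ) : ℂ)) (by simpa using hx)).continuousAt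
    exact ContinuousAt.comp (f := fun z : ℝ => ((z / (2 * π) : ℝ) : ℂ) * Complex.I * ((4 * π * t : ℝ) : ℂ))
      (g := fun z => jacobiTheta₂ z (Complex.I * ((4 * π * t : ℝ) : ℂ))) h1 (by fun_prop)
  have := Complex.continuous_re.comp key
  exact this.continuousAt

end Theta
/-! ### Part 2: discrete Riesz inequality through polarisation -/
section Discrete
set_option linter.unusedSectionVars false

variable {ι : Type*} [Fintype ι] [DecidableEq ι]

noncomputable def indF (A : Finset ι) (i : ι) : ℝ := if i ∈ A then 1 else 0

noncomputable def polF (w : ι → ℝ) (σ : ι → ι) (A : Finset ι) : Finset ι :=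
  {i | (w (σ i) ≤ w i ∧ (i ∈ A ∨ σ i ∈ A)) ∨ (w i < w (σ i) ∧ i ∈ A ∧ σ i ∈ A)}

lemma indF_pol_max (w : ι → ℝ) (σ : ι → ι) (A : Finset ι) (i : ι) (h : w (σ i) ≤ w i) :
    indF (polF w σ A) i = max (indF A i) (indF A (σ i)) := by
  have h' : ¬ w i < w (σ i) := not_lt.2 h
  by_cases h1 : i ∈ A <;> by_cases h2 : σ i ∈ A <;> simp [indF, polF, h, h', h1, h2]

lemma indF_pol_min (w : ι → ℝ) (hw : Function.Injective w) (σ : ι → ι)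
    (hσ : Function.Involutive σ) (A : Finset ι) (i : ι)
    (h : w (σ i) ≤ w i) :
    indF (polF w σ A) (σ i) = min (indF A i) (indF A (σ i)) := by
  rcases eq_or_lt_of_le h with h0 | h0
  · have := hw h0
    rw [this]
    rw [indF_pol_max _ _ _ _ h, this]
    simp
  · have h' : ¬ w i ≤ w (σ i) := not_le.2 h0
    by_cases h1 : i ∈ A <;> by_cases h2 : σ i ∈ A <;> simp [indF, polF, h', h0, h1, h2, hσ i]


lemma sum_sym (σ : ι → ι) (hσ : Function.Involutive σ) (f : ι → ℝ) :
    2 * ∑ i, f i = ∑ i, (f i + f (σ i)) := by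
  have : ∑ i, f (σ i) = ∑ i, f i := (Equiv.sum_comp hσ.toPerm f)
  rw [Finset.sum_add_distrib, this]; ring

lemma pol_card (w : ι → ℝ) (hw : Function.Injective w) (σ : ι → ι)
    (hσ : Function.Involutive σ) (A : Finset ι) : (polF w σ A).card = A.card := by
  have key : ∀ A : Finset ι, (A.card : ℝ) = ∑ i, indF A i := by
    intro A; simp [indF]
  have : ((polF w σ A).card : ℝ) = A.card := by
    rw [key, key]
    have h2 : (2:ℝ) * ∑ i, indF (polF w σ A) i = 2 * ∑ i, indF A i := by
      rw [sum_sym σ hσ, sum_sym σ hσ]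
      refine Finset.sum_congr rfl fun i _ => ?_
      rcases le_total (w (σ i)) (w i) with h | h
      · rw [indF_pol_max _ _ _ _ h, indF_pol_min _ hw _ hσ _ _ h, max_add_min]
      · have h' : w (σ (σ i)) ≤ w (σ i) := by rwa [hσ i]
        have e1 := indF_pol_max w σ A (σ i) h'
        have e2 := indF_pol_min w hw σ hσ A (σ i) h'
        rw [hσ i] at e1 e2
        rw [e1, e2, min_add_max, add_comm]
    linarith
  exact_mod_cast this

lemma max_min_mul_le (a a' u v : ℝ) (h : v ≤ u) :
    a * u + a' * v ≤ max a a' * u + min a a' * v := by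
  rcases le_total a a' with h1 | h1 <;> simp [h1]
  nlinarith

lemma max_min_mul_lt (a a' u v : ℝ) (h : v < u) (h1 : a < a') :
    a * u + a' * v < max a a' * u + min a a' * v := by
  simp [h1.le]
  nlinarith

lemma pol_wsum (w : ι → ℝ) (hw : Function.Injective w) (σ : ι → ι)
    (hσ : Function.Involutive σ) (A : Finset ι) :
    ∑ i, indF A i * w i ≤ ∑ i, indF (polF w σ A) i * w i := by
  have : 2 * ∑ i, indF A i * w i ≤ 2 * ∑ i, indF (polF w σ A) i * w i := by
    rw [sum_sym σ hσ, sum_sym σ hσ]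
    refine Finset.sum_le_sum fun i _ => ?_
    rcases le_total (w (σ i)) (w i) with h | h
    · rw [indF_pol_max _ _ _ _ h, indF_pol_min _ hw _ hσ _ _ h]
      exact max_min_mul_le _ _ _ _ h
    · have h' : w (σ (σ i)) ≤ w (σ i) := by rwa [hσ i]
      have e1 := indF_pol_max w σ A (σ i) h'
      have e2 := indF_pol_min w hw σ hσ A (σ i) h'
      rw [hσ i] at e1 e2
      rw [e1, e2]
      have := max_min_mul_le (indF A (σ i)) (indF A i) _ _ h
      linarith
  linarith

lemma pol_wsum_lt (w : ι → ℝ) (hw : Function.Injective w) (σ : ι → ι)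
    (hσ : Function.Involutive σ) (A : Finset ι) (j : ι) (hj : j ∉ A) (hk : σ j ∈ A)
    (hjk : w (σ j) < w j) :
    ∑ i, indF A i * w i < ∑ i, indF (polF w σ A) i * w i := by
  have : 2 * ∑ i, indF A i * w i < 2 * ∑ i, indF (polF w σ A) i * w i := by
    rw [sum_sym σ hσ, sum_sym σ hσ]
    refine Finset.sum_lt_sum (fun i _ => ?_) ⟨j, Finset.mem_univ _, ?_⟩
    · rcases le_total (w (σ i)) (w i) with h | h
      · rw [indF_pol_max _ _ _ _ h, indF_pol_min _ hw _ hσ _ _ h]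
        exact max_min_mul_le _ _ _ _ h
      · have h' : w (σ (σ i)) ≤ w (σ i) := by rwa [hσ i]
        have e1 := indF_pol_max w σ A (σ i) h'
        have e2 := indF_pol_min w hw σ hσ A (σ i) h'
        rw [hσ i] at e1 e2
        rw [e1, e2]
        have := max_min_mul_le (indF A (σ i)) (indF A i) _ _ h
        linarith
    · rw [indF_pol_max _ _ _ _ hjk.le, indF_pol_min _ hw _ hσ _ _ hjk.le]
      exact max_min_mul_lt _ _ _ _ hjk (by simp [indF, hj, hk])
  linarith

noncomputable def JF (κ : ι → ι → ℝ) (A B : Finset ι) : ℝ := ∑ i, ∑ l, indF A i * indF B l * κ i l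

lemma four_pt (a a' b b' u v : ℝ) (h : v ≤ u) :
    (a * b + a' * b') * u + (a * b' + a' * b) * v ≤
    (max a a' * max b b' + min a a' * min b b') * u +
      (max a a' * min b b' + min a a' * max b b') * v := by
  rcases le_total a a' with h1 | h1 <;> rcases le_total b b' with h2 | h2 <;> simp [h1, h2] <;>
    nlinarith [mul_nonneg (sub_nonneg.2 h) (mul_nonneg (sub_nonneg.2 h1) (sub_nonneg.2 h2))]

lemma pol_J (w : ι → ℝ) (hw : Function.Injective w) (σ : ι → ι)
    (hσ : Function.Involutive σ) (κ : ι → ι → ℝ)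
    (hκ1 : ∀ i l, κ (σ i) (σ l) = κ i l)
    (hκ2 : ∀ i l, w (σ i) ≤ w i → w (σ l) ≤ w l → κ i (σ l) ≤ κ i l) (A B : Finset ι) :
    JF κ A B ≤ JF κ (polF w σ A) (polF w σ B) := by
  have hκ3 : ∀ i l, κ (σ i) l = κ i (σ l) := by
    intro i l
    rw [← hκ1 i (σ l), hσ l]
  have expand : ∀ A B : Finset ι, 4 * JF κ A B = ∑ i, ∑ l,
      ((indF A i * indF B l + indF A (σ i) * indF B (σ l)) * κ i l +
        (indF A i * indF B (σ l) + indF A (σ i) * indF B l) * κ i (σ l)) := by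
    intro A B
    unfold JF
    have : (4:ℝ) * ∑ i, ∑ l, indF A i * indF B l * κ i l =
      2 * (2 * ∑ i, ∑ l, indF A i * indF B l * κ i l) := by ring
    rw [this, sum_sym σ hσ, Finset.mul_sum]
    refine Finset.sum_congr rfl fun i _ => ?_
    rw [← Finset.sum_add_distrib, sum_sym σ hσ]
    refine Finset.sum_congr rfl fun l _ => ?_
    rw [hκ1, hκ3]
    ring
  have : 4 * JF κ A B ≤ 4 * JF κ (polF w σ A) (polF w σ B) := by
    rw [expand, expand]
    refine Finset.sum_le_sum fun i _ => Finset.sum_le_sum fun l _ => ?_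
    have key : ∀ i l, w (σ i) ≤ w i → w (σ l) ≤ w l →
      ((indF A i * indF B l + indF A (σ i) * indF B (σ l)) * κ i l +
        (indF A i * indF B (σ l) + indF A (σ i) * indF B l) * κ i (σ l)) ≤
      ((indF (polF w σ A) i * indF (polF w σ B) l +
        indF (polF w σ A) (σ i) * indF (polF w σ B) (σ l)) * κ i l +
        (indF (polF w σ A) i * indF (polF w σ B) (σ l) +
          indF (polF w σ A) (σ i) * indF (polF w σ B) l) * κ i (σ l)) := by
      intro i l h1 h2
      rw [indF_pol_max _ _ _ _ h1, indF_pol_min _ hw _ hσ _ _ h1, indF_pol_max _ _ _ _ h2,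
        indF_pol_min _ hw _ hσ _ _ h2]
      exact four_pt _ _ _ _ _ _ (hκ2 i l h1 h2)
    rcases le_total (w (σ i)) (w i) with h1 | h1 <;>
      rcases le_total (w (σ l)) (w l) with h2 | h2
    · exact key i l h1 h2
    · have := key i (σ l) h1 (by rwa [hσ l])
      rw [hσ l] at this
      linarith
    · have := key (σ i) l (by rwa [hσ i]) h2
      rw [hκ1, hκ3, hσ i] at this
      linarith
    · have := key (σ i) (σ l) (by rwa [hσ i]) (by rwa [hσ l])
      rw [hκ1, hκ3, hσ i, hσ l] at this
      linarith
  linarith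

theorem disc_riesz (w : ι → ℝ) (hw : Function.Injective w) (κ : ι → ι → ℝ)
    (hσ : ∀ j k : ι, ∃ σ : ι → ι, Function.Involutive σ ∧ σ j = k ∧
      (∀ i l, κ (σ i) (σ l) = κ i l) ∧
      (∀ i l, w (σ i) ≤ w i → w (σ l) ≤ w l → κ i (σ l) ≤ κ i l)) (A B : Finset ι) :
    ∃ A' B' : Finset ι, A'.card = A.card ∧ B'.card = B.card ∧ JF κ A B ≤ JF κ A' B' ∧
      (∀ j, j ∉ A' → ∀ k ∈ A', w j ≤ w k) ∧ (∀ j, j ∉ B' → ∀ k ∈ B', w j ≤ w k) := by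
  classical
  let S : Finset (Finset ι × Finset ι) :=
    {q | q.1.card = A.card ∧ q.2.card = B.card ∧ JF κ A B ≤ JF κ q.1 q.2}
  let F : Finset ι × Finset ι → ℝ := fun q => ∑ i, indF q.1 i * w i + ∑ i, indF q.2 i * w i
  obtain ⟨⟨A', B'⟩, hq, hmax⟩ := Finset.exists_max_image S F ⟨(A, B), by simp [S]⟩
  simp only [S, Finset.mem_filter, Finset.mem_univ, true_and] at hq hmax
  obtain ⟨c1, c2, c3⟩ := hq
  refine ⟨A', B', c1, c2, c3, ?_, ?_⟩
  · intro j hj k hk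
    by_contra! hlt
    obtain ⟨σ, s1, s2, s3, s4⟩ := hσ j k
    have := hmax (polF w σ A', polF w σ B') ⟨by rw [pol_card w hw σ s1, c1],
      by rw [pol_card w hw σ s1, c2], c3.trans (pol_J w hw σ s1 κ s3 s4 _ _)⟩
    have h1 := pol_wsum_lt w hw σ s1 A' j hj (by rwa [s2]) (by rwa [s2])
    have h2 := pol_wsum w hw σ s1 B'
    simp only [F] at this
    linarith
  · intro j hj k hk
    by_contra! hlt
    obtain ⟨σ, s1, s2, s3, s4⟩ := hσ j k
    have := hmax (polF w σ A', polF w σ B') ⟨by rw [pol_card w hw σ s1, c1],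
      by rw [pol_card w hw σ s1, c2], c3.trans (pol_J w hw σ s1 κ s3 s4 _ _)⟩
    have h1 := pol_wsum_lt w hw σ s1 B' j hj (by rwa [s2]) (by rwa [s2])
    have h2 := pol_wsum w hw σ s1 A'
    simp only [F] at this
    linarith

/-- sample points -/
noncomputable def phiN (N : ℕ) (i : ℝ) : ℝ := -π + (i + 1 / 4) * (2 * π / N)

lemma phiN_abs_le (N : ℕ) [NeZero N] (i : Fin N) : |phiN N (i : ℕ)| ≤ π := by
  have hN : (0:ℝ) < N := by exact_mod_cast NeZero.pos N
  have hi : ((i : ℕ) : ℝ) + 1 ≤ N := by exact_mod_cast i.2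
  have hi0 : (0:ℝ) ≤ (i : ℕ) := by positivity
  have := Real.pi_pos
  unfold phiN
  rw [abs_le]
  constructor
  · have : 0 ≤ (((i : ℕ) : ℝ) + 1 / 4) * (2 * π / N) := by positivity
    linarith
  · have : (((i : ℕ) : ℝ) + 1 / 4) * (2 * π / N) ≤ N * (2 * π / N) := by gcongr; linarith
    rw [mul_div_cancel₀ _ hN.ne'] at this
    linarith

lemma phiN_cos_inj (N : ℕ) [NeZero N] :
    Function.Injective (fun i : Fin N => Real.cos (phiN N (i : ℕ))) := by
  intro i j h
  simp only at h
  rw [← Real.cos_abs, ← Real.cos_abs (phiN N (j : ℕ))] at h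
  have hpi := Real.pi_pos
  have hN : (0:ℝ) < N := by exact_mod_cast NeZero.pos N
  have := Real.injOn_cos ⟨abs_nonneg _, phiN_abs_le N i⟩ ⟨abs_nonneg _, phiN_abs_le N j⟩ h
  rcases abs_eq_abs.1 this with h1 | h1
  · unfold phiN at h1
    have h2 : (((i : ℕ) : ℝ) + 1 / 4) * (2 * π / N) = (((j : ℕ) : ℝ) + 1 / 4) * (2 * π / N) := by
      linarith
    have h3 := mul_right_cancel₀ (by positivity) h2
    have : ((i : ℕ) : ℝ) = (j : ℕ) := by linarith
    exact Fin.ext (by exact_mod_cast this)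
  · exfalso
    unfold phiN at h1
    field_simp at h1
    have h2 : (4 * ((i : ℕ) : ℝ) + 4 * ((j : ℕ) : ℝ) + 2) = 4 * N := by linarith
    have h3 : 4 * (i : ℕ) + 4 * (j : ℕ) + 2 = 4 * N := by exact_mod_cast h2
    omega

lemma fin_refl (N : ℕ) [NeZero N] (j k i : Fin N) :
    ∃ m : ℤ, (((j + k - i : Fin N) : ℕ) : ℝ) = (j : ℕ) + (k : ℕ) - (i : ℕ) + m * N := by
  have h1 : (((j + k - i : Fin N) : ℕ)) = (N - i + (j + k) % N) % N := by
    rw [Fin.val_sub, Fin.val_add]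
  have h2 := Nat.mod_add_div (N - i + (j + k) % N) N
  have h3 := Nat.mod_add_div ((j : ℕ) + k) N
  rw [← h1] at h2
  refine ⟨1 - (((N - i + (j + k) % N) / N : ℕ) : ℤ) - ((((j : ℕ) + k) / N : ℕ) : ℤ), ?_⟩
  have h4 : (((j + k - i : Fin N) : ℕ) : ℝ) + N * (((N - i + (j + k) % N) / N : ℕ) : ℝ) =
     (N - (i : ℕ)) + ((((j : ℕ) + k) % N : ℕ) : ℝ) := by
    rw [← Nat.cast_sub i.2.le]
    exact_mod_cast h2
  have h5 : ((((j : ℕ) + k) % N : ℕ) : ℝ) + N * ((((j : ℕ) + k) / N : ℕ) : ℝ) = (j : ℕ) + (k : ℕ) := by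
    exact_mod_cast h3
  rw [Int.cast_sub, Int.cast_sub, Int.cast_one, Int.cast_natCast, Int.cast_natCast]
  linarith

theorem disc_riesz_circle (N : ℕ) [NeZero N] (K : ℝ → ℝ)
    (hK : ∀ x y, Real.cos x ≤ Real.cos y → K x ≤ K y) (A B : Finset (Fin N)) :
    ∃ A' B' : Finset (Fin N), A'.card = A.card ∧ B'.card = B.card ∧
      JF (fun i l : Fin N => K (phiN N (i : ℕ) - phiN N (l : ℕ))) A B ≤
        JF (fun i l : Fin N => K (phiN N (i : ℕ) - phiN N (l : ℕ))) A' B' ∧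
      (∀ j, j ∉ A' → ∀ k ∈ A', |phiN N (k : ℕ)| ≤ |phiN N (j : ℕ)|) ∧
      (∀ j, j ∉ B' → ∀ k ∈ B', |phiN N (k : ℕ)| ≤ |phiN N (j : ℕ)|) := by
  have hpi := Real.pi_pos
  have hN : (0:ℝ) < N := by exact_mod_cast NeZero.pos N
  have hcos : ∀ j k : Fin N, Real.cos (phiN N (j : ℕ)) ≤ Real.cos (phiN N (k : ℕ)) →
      |phiN N (k : ℕ)| ≤ |phiN N (j : ℕ)| := by
    intro j k h
    by_contra! hlt
    have := Real.strictAntiOn_cos ⟨abs_nonneg _, phiN_abs_le N j⟩ ⟨abs_nonneg _, phiN_abs_le N k⟩ hlt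
    rw [Real.cos_abs, Real.cos_abs] at this
    linarith
  suffices hσ : ∀ j k : Fin N, ∃ σ : Fin N → Fin N, Function.Involutive σ ∧ σ j = k ∧
      (∀ i l, K (phiN N (σ i : ℕ) - phiN N (σ l : ℕ)) = K (phiN N (i : ℕ) - phiN N (l : ℕ))) ∧
      (∀ i l, Real.cos (phiN N (σ i : ℕ)) ≤ Real.cos (phiN N (i : ℕ)) →
        Real.cos (phiN N (σ l : ℕ)) ≤ Real.cos (phiN N (l : ℕ)) →
        K (phiN N (i : ℕ) - phiN N (σ l : ℕ)) ≤ K (phiN N (i : ℕ) - phiN N (l : ℕ))) by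
    obtain ⟨A', B', c1, c2, c3, c4, c5⟩ := disc_riesz (fun i : Fin N => Real.cos (phiN N (i : ℕ)))
      (phiN_cos_inj N) (fun i l : Fin N => K (phiN N (i : ℕ) - phiN N (l : ℕ))) hσ A B
    exact ⟨A', B', c1, c2, c3, fun j hj k hk => hcos _ _ (c4 j hj k hk),
      fun j hj k hk => hcos _ _ (c5 j hj k hk)⟩
  · intro j k
    set γ : ℝ := ((j : ℕ) + (k : ℕ) + 1 / 2) * (2 * π / N) with hγ
    have hrefl : ∀ i : Fin N, ∃ m : ℤ, phiN N ((j + k - i : Fin N) : ℕ) =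
        γ - phiN N (i : ℕ) + m * (2 * π) := by
      intro i
      obtain ⟨m, hm⟩ := fin_refl N j k i
      refine ⟨m - 1, ?_⟩
      unfold phiN
      rw [hm, hγ]
      push_cast
      field_simp
      ring
    have hs : Real.sin (γ / 2) ≠ 0 := by
      rw [Ne, Real.sin_eq_zero_iff]
      rintro ⟨n, hn⟩
      rw [hγ] at hn
      field_simp at hn
      have h2 : (4 * (n : ℝ) * N) = 4 * (j : ℕ) + 4 * (k : ℕ) + 2 := by linarith
      have h3 : 4 * (n * N) = 4 * ((j : ℕ) : ℤ) + 4 * ((k : ℕ) : ℤ) + 2 := by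
        have h4 : (4 * (n * N) : ℝ) = 4 * ((j : ℕ) : ℤ) + 4 * ((k : ℕ) : ℤ) + 2 := by
          push_cast; linarith
        exact_mod_cast h4
      omega
    refine ⟨fun i => j + k - i, fun i => by simp, by simp, ?_, ?_⟩
    · intro i l
      obtain ⟨m1, h1⟩ := hrefl i
      obtain ⟨m2, h2⟩ := hrefl l
      have hc : Real.cos (phiN N ((j + k - i : Fin N) : ℕ) - phiN N ((j + k - l : Fin N) : ℕ)) =
          Real.cos (phiN N (i : ℕ) - phiN N (l : ℕ)) := by
        have e : phiN N ((j + k - i : Fin N) : ℕ) - phiN N ((j + k - l : Fin N) : ℕ) =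
            -(phiN N (i : ℕ) - phiN N (l : ℕ)) + ((m1 - m2 : ℤ) : ℝ) * (2 * π) := by
          rw [h1, h2]
          push_cast
          ring
        rw [e, Real.cos_add_int_mul_two_pi, Real.cos_neg]
      exact le_antisymm (hK _ _ hc.le) (hK _ _ hc.ge)
    · intro i l hi hl
      apply hK
      have hcs : ∀ i : Fin N, Real.cos (phiN N ((j + k - i : Fin N) : ℕ)) =
          Real.cos (phiN N (i : ℕ) - γ) := by
        intro i
        obtain ⟨m1, h1⟩ := hrefl i
        rw [h1, Real.cos_add_int_mul_two_pi, ← Real.cos_neg]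
        congr 1; ring
      obtain ⟨m2, h2⟩ := hrefl l
      have hc2 : Real.cos (phiN N (i : ℕ) - phiN N ((j + k - l : Fin N) : ℕ)) =
          Real.cos (phiN N (i : ℕ) + phiN N (l : ℕ) - γ) := by
        rw [h2, ← Real.cos_add_int_mul_two_pi _ m2]
        congr 1; ring
      rw [hc2]
      simp only [hcs] at hi hl
      have hsub : ∀ x, Real.cos x - Real.cos (x - γ) =
          -2 * Real.sin (x - γ / 2) * Real.sin (γ / 2) := by
        intro x
        rw [Real.cos_sub_cos]
        congr 2
        · congr 1; congr 1; ring
        · congr 1; ring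
      have e1 := hsub (phiN N (i : ℕ))
      have e2 := hsub (phiN N (l : ℕ))
      have e3 : Real.cos (phiN N (i : ℕ) - phiN N (l : ℕ)) -
          Real.cos (phiN N (i : ℕ) + phiN N (l : ℕ) - γ) =
          2 * Real.sin (phiN N (i : ℕ) - γ / 2) * Real.sin (phiN N (l : ℕ) - γ / 2) := by
        rw [Real.cos_sub_cos]
        have a1 : ((phiN N (i : ℕ) - phiN N (l : ℕ)) + (phiN N (i : ℕ) + phiN N (l : ℕ) - γ)) / 2 =
          phiN N (i : ℕ) - γ / 2 := by ring
        have a2 : ((phiN N (i : ℕ) - phiN N (l : ℕ)) - (phiN N (i : ℕ) + phiN N (l : ℕ) - γ)) / 2 =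
          -(phiN N (l : ℕ) - γ / 2) := by ring
        rw [a1, a2, Real.sin_neg]
        ring
      set x1 := Real.sin (phiN N (i : ℕ) - γ / 2)
      set x2 := Real.sin (phiN N (l : ℕ) - γ / 2)
      set z := Real.sin (γ / 2)
      have f1 : 0 ≤ -2 * x1 * z := by linarith
      have f2 : 0 ≤ -2 * x2 * z := by linarith
      have f3 : 0 ≤ x1 * x2 * (z * z) := by nlinarith [mul_nonneg f1 f2]
      have hz : 0 < z * z := mul_self_pos.2 hs
      have f4 : 0 ≤ x1 * x2 := nonneg_of_mul_nonneg_left f3 hz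
      linarith

end Discrete
/-! ### Part 3: Riesz inequality for sets on the circle -/
section Cont
set_option linter.unusedSectionVars false
set_option linter.unusedVariables false

noncomputable def JE (K : ℝ → ℝ) (A B : Set ℝ) : ℝ≥0∞ :=
  ∫⁻ x in A, ∫⁻ y in B, ENNReal.ofReal (K (x - y))

lemma JE_mono (K : ℝ → ℝ) {A A' B B' : Set ℝ} (hA : A ⊆ A') (hB : B ⊆ B') :
    JE K A B ≤ JE K A' B' := by
  unfold JE
  refine (lintegral_mono_set hA).trans (lintegral_mono fun x => lintegral_mono_set hB)

lemma JE_le {K : ℝ → ℝ} {M : ℝ} (hM : ∀ x, K x ≤ M) (A A' B B' : Set ℝ) :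
    JE K A B ≤ JE K A' B' +
      ENNReal.ofReal M * (volume (A \ A') * volume B + volume A' * volume (B \ B')) := by
  unfold JE
  have hK : ∀ z, ENNReal.ofReal (K z) ≤ ENNReal.ofReal M := fun z => ENNReal.ofReal_le_ofReal (hM z)
  have h1 : ∫⁻ x in A, ∫⁻ y in B, ENNReal.ofReal (K (x - y)) ≤
      (∫⁻ x in A', ∫⁻ y in B, ENNReal.ofReal (K (x - y))) +
      ENNReal.ofReal M * (volume (A \ A') * volume B) := by
    calc _ ≤ ∫⁻ x in A' ∪ (A \ A'), ∫⁻ y in B, ENNReal.ofReal (K (x - y)) :=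
          lintegral_mono_set (by simp)
      _ ≤ _ := lintegral_union_le _ _ _
      _ ≤ _ := by
        gcongr
        calc ∫⁻ x in A \ A', ∫⁻ y in B, ENNReal.ofReal (K (x - y))
            ≤ ∫⁻ x in A \ A', ∫⁻ y in B, ENNReal.ofReal M :=
              lintegral_mono fun x => lintegral_mono fun y => hK _
          _ = _ := by
            simp only [lintegral_const, Measure.restrict_apply_univ]
            ring
  have h2 : ∫⁻ x in A', ∫⁻ y in B, ENNReal.ofReal (K (x - y)) ≤
      (∫⁻ x in A', ∫⁻ y in B', ENNReal.ofReal (K (x - y))) +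
      ENNReal.ofReal M * (volume A' * volume (B \ B')) := by
    calc _ ≤ ∫⁻ x in A', ((∫⁻ y in B', ENNReal.ofReal (K (x - y))) +
          ENNReal.ofReal M * volume (B \ B')) := by
          refine lintegral_mono fun x => ?_
          calc _ ≤ ∫⁻ y in B' ∪ (B \ B'), ENNReal.ofReal (K (x - y)) :=
                lintegral_mono_set (by simp)
            _ ≤ _ := lintegral_union_le _ _ _
            _ ≤ _ := by
              gcongr
              calc ∫⁻ y in B \ B', ENNReal.ofReal (K (x - y))
                  ≤ ∫⁻ y in B \ B', ENNReal.ofReal M := lintegral_mono fun y => hK _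
                _ = _ := by simp only [lintegral_const, Measure.restrict_apply_univ]
      _ = _ := by
        rw [lintegral_add_right _ measurable_const]
        simp only [lintegral_const, Measure.restrict_apply_univ]
        ring
  refine h1.trans ?_
  rw [mul_add, add_comm (ENNReal.ofReal M * (volume (A \ A') * volume B)), ← add_assoc]
  gcongr

lemma vol_annulus {a c : ℝ} (ha : 0 ≤ a) :
    volume (Set.Ioo (-c) c \ Set.Ioo (-a) a) ≤ ENNReal.ofReal (2 * (c - a)) := by
  have hsub : Set.Ioo (-c) c \ Set.Ioo (-a) a ⊆ Set.Icc (-c) (-a) ∪ Set.Icc a c := by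
    rintro x ⟨⟨h1, h2⟩, h3⟩
    by_cases h : x ≤ -a
    · exact Or.inl ⟨h1.le, h⟩
    · push Not at h
      refine Or.inr ⟨?_, h2.le⟩
      by_contra! h4
      exact h3 ⟨h, h4⟩
  refine (measure_mono hsub).trans ((measure_union_le _ _).trans ?_)
  rw [Real.volume_Icc, Real.volume_Icc]
  rcases le_total a c with h | h
  · rw [← ENNReal.ofReal_add (by linarith) (by linarith)]
    exact ENNReal.ofReal_le_ofReal (by linarith)
  · rw [ENNReal.ofReal_of_nonpos (by linarith), ENNReal.ofReal_of_nonpos (by linarith)]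
    simp

lemma vol_symmSet {A : Set ℝ} (hA : volume A ≠ ⊤) : volume (symmSet A) = volume A := by
  unfold symmSet
  rw [Real.volume_Ioo]
  have : (volume A).toReal / 2 - -((volume A).toReal / 2) = (volume A).toReal := by ring
  rw [this, ENNReal.ofReal_toReal hA]

lemma vol_le_T {A : Set ℝ} (hA : A ⊆ Set.Ico (-π) π) : volume A ≤ ENNReal.ofReal (2 * π) := by
  refine (measure_mono hA).trans ?_
  rw [Real.volume_Ico]
  exact ENNReal.ofReal_le_ofReal (by linarith)

lemma symmSet_sub {A : Set ℝ} (hA : A ⊆ Set.Ico (-π) π) : symmSet A ⊆ Set.Ioo (-π) π := by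
  have h := ENNReal.toReal_mono ENNReal.ofReal_ne_top (vol_le_T hA)
  rw [ENNReal.toReal_ofReal (by positivity)] at h
  exact Set.Ioo_subset_Ioo (by linarith) (by linarith)

noncomputable def cellN (N : ℕ) (i : ℝ) : Set ℝ :=
  Set.Ico (-π + i * (2 * π / N)) (-π + (i + 1) * (2 * π / N))

noncomputable def cellU (N : ℕ) (A : Finset (Fin N)) : Set ℝ := ⋃ i ∈ A, cellN N (i : ℕ)

section
variable (N : ℕ) [NeZero N]

lemma hN_pos : 0 < 2 * π / (N : ℝ) := by
  have hN : (0:ℝ) < N := by exact_mod_cast NeZero.pos N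
  have := Real.pi_pos
  positivity

lemma cell_sub (i : Fin N) : cellN N (i : ℕ) ⊆ Set.Ico (-π) π := by
  have hN : (0:ℝ) < N := by exact_mod_cast NeZero.pos N
  have h0 := hN_pos N
  have hi : ((i : ℕ) : ℝ) + 1 ≤ N := by exact_mod_cast i.2
  have hm : (((i : ℕ) : ℝ) + 1) * (2 * π / N) ≤ N * (2 * π / N) := by gcongr
  rw [mul_div_cancel₀ _ hN.ne'] at hm
  have hi0 : (0:ℝ) ≤ (i : ℕ) * (2 * π / N) := by positivity
  apply Set.Ico_subset_Ico <;> linarith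

lemma cellU_sub (A : Finset (Fin N)) : cellU N A ⊆ Set.Ico (-π) π :=
  Set.iUnion₂_subset fun i _ => cell_sub N i

lemma exists_cell {x : ℝ} (hx : x ∈ Set.Ico (-π) π) : ∃ i : Fin N, x ∈ cellN N (i : ℕ) := by
  have hN : (0:ℝ) < N := by exact_mod_cast NeZero.pos N
  have h0 := hN_pos N
  have hx0 : 0 ≤ (x + π) / (2 * π / N) := div_nonneg (by linarith [hx.1]) h0.le
  have h1 := Nat.floor_le hx0
  have h2 := Nat.lt_floor_add_one ((x + π) / (2 * π / N))
  rw [le_div_iff₀ h0] at h1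
  rw [div_lt_iff₀ h0] at h2
  have h3 : ⌊(x + π) / (2 * π / N)⌋₊ < N := by
    rw [Nat.floor_lt hx0, div_lt_iff₀ h0, mul_div_cancel₀ _ hN.ne']
    linarith [hx.2]
  refine ⟨⟨_, h3⟩, ?_, ?_⟩
  · simp only; linarith
  · simp only; linarith

lemma cell_dist {x : ℝ} {i : ℝ} (hx : x ∈ cellN N i) : |x - phiN N i| ≤ 2 * π / N := by
  have h0 := hN_pos N
  obtain ⟨h1, h2⟩ := hx
  unfold phiN
  rw [abs_le]
  constructor <;> nlinarith

lemma cell_disj {i j : Fin N} (h : i ≠ j) : Disjoint (cellN N (i : ℕ)) (cellN N (j : ℕ)) := by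
  have h0 := hN_pos N
  wlog hij : i < j generalizing i j
  · exact (this h.symm (lt_of_le_of_ne (not_lt.1 hij) h.symm)).symm
  rw [Set.disjoint_left]
  rintro x ⟨_, h2⟩ ⟨h3, _⟩
  have : ((i : ℕ) : ℝ) + 1 ≤ (j : ℕ) := by exact_mod_cast hij
  have : (((i : ℕ) : ℝ) + 1) * (2 * π / N) ≤ (j : ℕ) * (2 * π / N) := by gcongr
  linarith

lemma cell_meas (i : ℝ) : MeasurableSet (cellN N i) := measurableSet_Ico

lemma cell_vol (i : ℝ) : volume (cellN N i) = ENNReal.ofReal (2 * π / N) := by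
  unfold cellN
  rw [Real.volume_Ico]
  congr 1
  ring

lemma cellU_meas (A : Finset (Fin N)) : MeasurableSet (cellU N A) :=
  Finset.measurableSet_biUnion _ fun i _ => cell_meas N _

lemma cellU_lint (A : Finset (Fin N)) (f : ℝ → ℝ≥0∞) :
    ∫⁻ x in cellU N A, f x = ∑ i ∈ A, ∫⁻ x in cellN N (i : ℕ), f x :=
  lintegral_biUnion_finset (fun i _ j _ h => cell_disj N h) (fun i _ => cell_meas N _) _

lemma cellU_vol (A : Finset (Fin N)) :
    volume (cellU N A) = A.card * ENNReal.ofReal (2 * π / N) := by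
  have := cellU_lint N A (fun _ => 1)
  simpa [cell_vol] using this

lemma JE_cell {K : ℝ → ℝ} (hK : Measurable K) (A B : Finset (Fin N)) :
    JE K (cellU N A) (cellU N B) = ∑ i ∈ A, ∑ l ∈ B,
      ∫⁻ x in cellN N (i : ℕ), ∫⁻ y in cellN N (l : ℕ), ENNReal.ofReal (K (x - y)) := by
  unfold JE
  rw [cellU_lint]
  refine Finset.sum_congr rfl fun i _ => ?_
  simp_rw [cellU_lint]
  rw [lintegral_finset_sum]
  intro l _
  have : Measurable (fun q : ℝ × ℝ => ENNReal.ofReal (K (q.1 - q.2))) := by fun_prop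
  exact this.lintegral_prod_right'

lemma JF_eq {ι : Type*} [Fintype ι] [DecidableEq ι] (κ : ι → ι → ℝ) (A B : Finset ι) :
    JF κ A B = ∑ i ∈ A, ∑ l ∈ B, κ i l := by
  unfold JF indF
  simp [ite_and, Finset.sum_ite_mem, ← Finset.sum_filter]

/-- hypothesis of closeness on the mesh -/
def MeshClose (K : ℝ → ℝ) (N : ℕ) (δ : ℝ) : Prop :=
  ∀ x y, |x| ≤ 2 * π → |y| ≤ 2 * π → |x - y| ≤ 2 * (2 * π / N) → |K x - K y| ≤ δ

lemma mesh_pt {K : ℝ → ℝ} {δ : ℝ} (hc : MeshClose K N δ) (i l : Fin N) {x y : ℝ}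
    (hx : x ∈ cellN N (i : ℕ)) (hy : y ∈ cellN N (l : ℕ)) :
    |K (x - y) - K (phiN N (i : ℕ) - phiN N (l : ℕ))| ≤ δ := by
  have h1 := cell_dist N hx
  have h2 := cell_dist N hy
  have h3 := cell_sub N i hx
  have h4 := cell_sub N l hy
  have h5 := phiN_abs_le N i
  have h6 := phiN_abs_le N l
  rw [abs_le] at h1 h2 h5 h6
  apply hc
  · rw [abs_le]; constructor <;> linarith [h3.1, h3.2, h4.1, h4.2]
  · rw [abs_le]; constructor <;> linarith [h3.1, h3.2, h4.1, h4.2]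
  · rw [abs_le]; constructor <;> linarith

lemma card_mul_le (A : Finset (Fin N)) : (A.card : ℝ) * (2 * π / N) ≤ 2 * π := by
  have hN : (0:ℝ) < N := by exact_mod_cast NeZero.pos N
  have h0 := hN_pos N
  have : (A.card : ℝ) ≤ N := by exact_mod_cast (by simpa using Finset.card_le_univ A)
  calc _ ≤ (N : ℝ) * (2 * π / N) := by gcongr
    _ = 2 * π := mul_div_cancel₀ _ hN.ne'

lemma sum_err (κ : Fin N → Fin N → ℝ) (hκ : ∀ i l, 0 ≤ κ i l) {δ : ℝ} (hδ : 0 ≤ δ)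
    (A B : Finset (Fin N)) :
    ∑ i ∈ A, ∑ l ∈ B, ENNReal.ofReal ((κ i l + δ) * (2 * π / N) ^ 2) ≤
    ENNReal.ofReal ((2 * π / N) ^ 2 * JF κ A B) + ENNReal.ofReal ((2 * π) ^ 2 * δ) := by
  have h0 := hN_pos N
  have hJ : 0 ≤ JF κ A B := by
    rw [JF_eq]; exact Finset.sum_nonneg fun i _ => Finset.sum_nonneg fun l _ => hκ i l
  rw [← ENNReal.ofReal_add (by positivity) (by positivity)]
  have : ∑ i ∈ A, ∑ l ∈ B, ENNReal.ofReal ((κ i l + δ) * (2 * π / N) ^ 2) =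
      ENNReal.ofReal (∑ i ∈ A, ∑ l ∈ B, (κ i l + δ) * (2 * π / N) ^ 2) := by
    have hn : ∀ i l, 0 ≤ (κ i l + δ) * (2 * π / N) ^ 2 := fun i l => by
      have := hκ i l
      positivity
    rw [ENNReal.ofReal_sum_of_nonneg (fun i _ => Finset.sum_nonneg fun l _ => hn i l)]
    refine Finset.sum_congr rfl fun i _ => ?_
    rw [ENNReal.ofReal_sum_of_nonneg (fun l _ => hn i l)]
  rw [this]
  apply ENNReal.ofReal_le_ofReal
  simp_rw [← Finset.sum_mul, Finset.sum_add_distrib]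
  rw [← JF_eq]
  simp only [Finset.sum_const, nsmul_eq_mul]
  have hA := card_mul_le N A
  have hB := card_mul_le N B
  have : ((A.card : ℝ) * (2 * π / N)) * ((B.card : ℝ) * (2 * π / N)) ≤ (2 * π) * (2 * π) := by
    gcongr
  nlinarith

lemma JE_cell_le {K : ℝ → ℝ} (hK : Measurable K) (hK0 : ∀ x, 0 ≤ K x) {δ : ℝ} (hδ : 0 ≤ δ)
    (hc : MeshClose K N δ) (A B : Finset (Fin N)) :
    JE K (cellU N A) (cellU N B) ≤
      ENNReal.ofReal ((2 * π / N) ^ 2 *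
        JF (fun i l : Fin N => K (phiN N (i : ℕ) - phiN N (l : ℕ))) A B) +
      ENNReal.ofReal ((2 * π) ^ 2 * δ) := by
  have h0 := hN_pos N
  rw [JE_cell N hK]
  refine le_trans ?_ (sum_err N _ (fun i l => hK0 _) hδ A B)
  refine Finset.sum_le_sum fun i _ => Finset.sum_le_sum fun l _ => ?_
  set c := K (phiN N (i : ℕ) - phiN N (l : ℕ)) + δ
  have hc0 : 0 ≤ c := add_nonneg (hK0 _) hδ
  calc _ ≤ ∫⁻ x in cellN N (i : ℕ), ∫⁻ y in cellN N (l : ℕ), ENNReal.ofReal c := by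
        refine setLIntegral_mono' (cell_meas N _) fun x hx => setLIntegral_mono' (cell_meas N _)
          fun y hy => ENNReal.ofReal_le_ofReal ?_
        have := (abs_le.1 (mesh_pt N hc i l hx hy)).2
        simp only [c]; linarith
    _ = _ := by
      simp only [lintegral_const, Measure.restrict_apply_univ, cell_vol]
      rw [← ENNReal.ofReal_mul hc0, ← ENNReal.ofReal_mul (by positivity)]
      congr 1; ring

lemma JE_cell_ge {K : ℝ → ℝ} (hK : Measurable K) (hK0 : ∀ x, 0 ≤ K x) {δ : ℝ} (hδ : 0 ≤ δ)
    (hc : MeshClose K N δ) (A B : Finset (Fin N)) :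
    ENNReal.ofReal ((2 * π / N) ^ 2 *
        JF (fun i l : Fin N => K (phiN N (i : ℕ) - phiN N (l : ℕ))) A B) ≤
    JE K (cellU N A) (cellU N B) +
      ENNReal.ofReal ((2 * π) ^ 2 * δ) := by
  have h0 := hN_pos N
  have hc0 : ∀ i l : Fin N, 0 ≤ K (phiN N (i : ℕ) - phiN N (l : ℕ)) := fun i l => hK0 _
  calc _ = ∑ i ∈ A, ∑ l ∈ B, ENNReal.ofReal
          (K (phiN N (i : ℕ) - phiN N (l : ℕ)) * (2 * π / N) ^ 2) := by
        rw [JF_eq, Finset.mul_sum, ENNReal.ofReal_sum_of_nonneg]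
        · refine Finset.sum_congr rfl fun i _ => ?_
          rw [Finset.mul_sum, ENNReal.ofReal_sum_of_nonneg]
          · exact Finset.sum_congr rfl fun l _ => by rw [mul_comm]
          · intro l _; have := hc0 i l; positivity
        · intro i _; exact mul_nonneg (by positivity) (Finset.sum_nonneg fun l _ => hc0 i l)
    _ ≤ ∑ i ∈ A, ∑ l ∈ B, ((∫⁻ x in cellN N (i : ℕ), ∫⁻ y in cellN N (l : ℕ),
          ENNReal.ofReal (K (x - y))) + ENNReal.ofReal ((0 + δ) * (2 * π / N) ^ 2)) := by
        refine Finset.sum_le_sum fun i _ => Finset.sum_le_sum fun l _ => ?_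
        set c := K (phiN N (i : ℕ) - phiN N (l : ℕ))
        calc _ = ∫⁻ x in cellN N (i : ℕ), ∫⁻ y in cellN N (l : ℕ), ENNReal.ofReal c := by
              simp only [lintegral_const, Measure.restrict_apply_univ, cell_vol]
              rw [← ENNReal.ofReal_mul (hc0 i l),
                ← ENNReal.ofReal_mul (mul_nonneg (hc0 i l) h0.le)]
              congr 1; ring
          _ ≤ ∫⁻ x in cellN N (i : ℕ), ∫⁻ y in cellN N (l : ℕ),
              (ENNReal.ofReal (K (x - y)) + ENNReal.ofReal δ) := by
              refine setLIntegral_mono' (cell_meas N _) fun x hx =>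
                setLIntegral_mono' (cell_meas N _) fun y hy => ?_
              rw [← ENNReal.ofReal_add (hK0 _) hδ]
              apply ENNReal.ofReal_le_ofReal
              have := (abs_le.1 (mesh_pt N hc i l hx hy)).1
              simp only [c]; linarith
          _ = _ := by
              simp_rw [lintegral_add_right _ (measurable_const (a := ENNReal.ofReal δ))]
              rw [lintegral_add_right _ measurable_const]
              simp only [lintegral_const, Measure.restrict_apply_univ, cell_vol]
              congr 1
              rw [← ENNReal.ofReal_mul hδ, ← ENNReal.ofReal_mul (by positivity)]
              congr 1; ring
    _ = JE K (cellU N A) (cellU N B) + ∑ i ∈ A, ∑ l ∈ B,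
          ENNReal.ofReal ((0 + δ) * (2 * π / N) ^ 2) := by
        rw [JE_cell N hK]
        simp_rw [Finset.sum_add_distrib]
    _ ≤ _ := by
        gcongr
        refine (sum_err N (fun _ _ => 0) (fun _ _ => le_rfl) hδ A B).trans ?_
        simp [JF]

lemma cellU_symm (A : Finset (Fin N))
    (hA : ∀ j, j ∉ A → ∀ k ∈ A, |phiN N (k : ℕ)| ≤ |phiN N (j : ℕ)|) :
    volume (cellU N A \ symmSet (cellU N A)) ≤ ENNReal.ofReal (4 * (2 * π / N)) := by
  have h0 := hN_pos N
  have hfin : volume (cellU N A) ≠ ⊤ :=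
    ne_top_of_le_ne_top ENNReal.ofReal_ne_top (vol_le_T (cellU_sub N A))
  have hsub := symmSet_sub (cellU_sub N A)
  by_cases hI : symmSet (cellU N A) ⊆ cellU N A
  · rw [measure_diff hI (measurableSet_Ioo.nullMeasurableSet) (by rw [vol_symmSet hfin]; exact hfin),
      vol_symmSet hfin]
    simp
  · obtain ⟨y, hy, hyU⟩ := Set.not_subset.1 hI
    obtain ⟨l, hl⟩ := exists_cell N (Set.Ioo_subset_Ico_self (hsub hy))
    have hlA : l ∉ A := fun h => hyU (Set.mem_biUnion h hl)
    have d1 := cell_dist N hl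
    set a := (volume (cellU N A)).toReal / 2 with ha
    have hya : |y| < a := abs_lt.2 hy
    have hs : cellU N A \ symmSet (cellU N A) ⊆
        Set.Ioo (-(a + 2 * (2 * π / N))) (a + 2 * (2 * π / N)) \ Set.Ioo (-a) a := by
      rintro x ⟨hx, hxI⟩
      refine ⟨?_, hxI⟩
      obtain ⟨k, hk, hxk⟩ := Set.mem_iUnion₂.1 hx
      have d2 := cell_dist N hxk
      have d3 := hA l hlA k hk
      have e1 : |x| ≤ |x - phiN N (k : ℕ)| + |phiN N (k : ℕ)| := by
        simpa using abs_add_le (x - phiN N (k : ℕ)) (phiN N (k : ℕ))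
      have e2 : |phiN N (l : ℕ)| ≤ |y - phiN N (l : ℕ)| + |y| := by
        rw [abs_sub_comm]
        simpa using abs_add_le (phiN N (l : ℕ) - y) y
      exact abs_lt.1 (by linarith)
    refine (measure_mono hs).trans ((vol_annulus (by positivity)).trans ?_)
    apply ENNReal.ofReal_le_ofReal
    linarith

theorem cell_riesz {K : ℝ → ℝ} (hKm : Measurable K) (hK0 : ∀ x, 0 ≤ K x)
    (hK : ∀ x y, Real.cos x ≤ Real.cos y → K x ≤ K y) {δ : ℝ} (hδ : 0 ≤ δ)
    (hc : MeshClose K N δ) (hN : 2 * π / N ≤ δ) (A B : Finset (Fin N)) :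
    JE K (cellU N A) (cellU N B) ≤ JE K (symmSet (cellU N A)) (symmSet (cellU N B)) +
      ENNReal.ofReal ((8 * π ^ 2 + K 0 * (16 * π)) * δ) := by
  have h0 := hN_pos N
  have hM : ∀ x, K x ≤ K 0 := fun x => hK _ _ (by simpa using Real.cos_le_one x)
  obtain ⟨A', B', c1, c2, c3, c4, c5⟩ := disc_riesz_circle N K hK A B
  have s1 := JE_cell_le N hKm hK0 hδ hc A B
  have s2 := JE_cell_ge N hKm hK0 hδ hc A' B'
  have s3 := JE_le hM (cellU N A') (symmSet (cellU N A')) (cellU N B') (symmSet (cellU N B'))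
  have eA : symmSet (cellU N A') = symmSet (cellU N A) := by
    unfold symmSet; rw [cellU_vol, cellU_vol, c1]
  have eB : symmSet (cellU N B') = symmSet (cellU N B) := by
    unfold symmSet; rw [cellU_vol, cellU_vol, c2]
  have v1 : volume (cellU N A' \ symmSet (cellU N A')) ≤ ENNReal.ofReal (4 * δ) :=
    (cellU_symm N A' c4).trans (ENNReal.ofReal_le_ofReal (by linarith))
  have v2 : volume (cellU N B' \ symmSet (cellU N B')) ≤ ENNReal.ofReal (4 * δ) :=
    (cellU_symm N B' c5).trans (ENNReal.ofReal_le_ofReal (by linarith))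
  have v3 := vol_le_T (cellU_sub N B')
  have v4 := vol_le_T ((symmSet_sub (cellU_sub N A')).trans Set.Ioo_subset_Ico_self)
  have s4 : ENNReal.ofReal ((2 * π / N) ^ 2 *
        JF (fun i l : Fin N => K (phiN N (i : ℕ) - phiN N (l : ℕ))) A B) ≤
      ENNReal.ofReal ((2 * π / N) ^ 2 *
        JF (fun i l : Fin N => K (phiN N (i : ℕ) - phiN N (l : ℕ))) A' B') :=
    ENNReal.ofReal_le_ofReal (by gcongr)
  have s5 : ENNReal.ofReal (K 0) * (volume (cellU N A' \ symmSet (cellU N A')) *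
      volume (cellU N B') + volume (symmSet (cellU N A')) *
        volume (cellU N B' \ symmSet (cellU N B'))) ≤ ENNReal.ofReal (K 0 * (16 * π) * δ) := by
    calc _ ≤ ENNReal.ofReal (K 0) * (ENNReal.ofReal (4 * δ) * ENNReal.ofReal (2 * π) +
          ENNReal.ofReal (2 * π) * ENNReal.ofReal (4 * δ)) := by gcongr
      _ = _ := by
        have := Real.pi_pos
        rw [← ENNReal.ofReal_mul (by positivity), ← ENNReal.ofReal_mul (by positivity),
          ← ENNReal.ofReal_add (by positivity) (by positivity), ← ENNReal.ofReal_mul (hK0 0)]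
        congr 1; ring
  rw [eA, eB] at s3 s5
  calc _ ≤ _ := s1
    _ ≤ (JE K (symmSet (cellU N A)) (symmSet (cellU N B)) + ENNReal.ofReal (K 0 * (16 * π) * δ)
        + ENNReal.ofReal ((2 * π) ^ 2 * δ)) + ENNReal.ofReal ((2 * π) ^ 2 * δ) := by
        refine add_le_add (s4.trans (s2.trans ?_)) le_rfl
        refine add_le_add (s3.trans ?_) le_rfl
        exact add_le_add le_rfl s5
    _ = _ := by
      have h00 := hK0 0
      have := Real.pi_pos
      rw [add_assoc, add_assoc, ← ENNReal.ofReal_add (by positivity) (by positivity),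
        ← ENNReal.ofReal_add (by positivity) (by positivity)]
      congr 2; ring

end

open Filter Topology in
lemma open_approx {U : Set ℝ} (hU : IsOpen U) (hUT : U ⊆ Set.Ioo (-π) π) {ε : ℝ≥0∞} (hε : 0 < ε) :
    ∀ᶠ N : ℕ in atTop, ∃ A : Finset (Fin N), cellU N A ⊆ U ∧ volume (U \ cellU N A) ≤ ε := by
  classical
  let A : ∀ N : ℕ, Finset (Fin N) := fun N => {i | cellN N (i : ℕ) ⊆ U}
  have hsub : ∀ N, cellU N (A N) ⊆ U := by
    intro N
    refine Set.iUnion₂_subset fun i hi => ?_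
    simpa [A] using hi
  have hlim : Tendsto (fun N => volume (U \ cellU N (A N))) atTop (𝓝 (volume (∅ : Set ℝ))) := by
    refine tendsto_measure_of_tendsto_indicator atTop (B := Set.Ioo (-π) π) ?_ measurableSet_Ioo
      (by simp) ?_ ?_
    · intro N
      exact hU.measurableSet.diff (Finset.measurableSet_biUnion _ fun i _ => measurableSet_Ico)
    · exact Eventually.of_forall fun N => Set.diff_subset.trans hUT
    · intro x
      by_cases hx : x ∈ U
      · obtain ⟨r, hr, hball⟩ := Metric.isOpen_iff.1 hU x hx
        have ht : Tendsto (fun N : ℕ => 2 * π / (N : ℝ)) atTop (𝓝 0) :=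
          tendsto_const_div_atTop_nhds_zero_nat _
        filter_upwards [ht.eventually (gt_mem_nhds hr), eventually_gt_atTop 0] with N hN hN0
        haveI : NeZero N := ⟨hN0.ne'⟩
        obtain ⟨i, hi⟩ := exists_cell N (Set.Ioo_subset_Ico_self (hUT hx))
        have : i ∈ A N := by
          simp only [A, Finset.mem_filter, Finset.mem_univ, true_and]
          intro y hy
          apply hball
          rw [Metric.mem_ball, Real.dist_eq, abs_lt]
          obtain ⟨h1, h2⟩ := hi
          obtain ⟨h3, h4⟩ := hy
          constructor <;> nlinarith
        have hxU : x ∈ cellU N (A N) := Set.mem_biUnion this hi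
        simp [hxU]
      · simp [hx]
  rw [measure_empty] at hlim
  filter_upwards [hlim.eventually (gt_mem_nhds hε)] with N hN
  exact ⟨A N, hsub N, hN.le⟩

open Filter Topology in
theorem riesz_sets {K : ℝ → ℝ} (hKc : Continuous K) (hK0 : ∀ x, 0 ≤ K x)
    (hK : ∀ x y, Real.cos x ≤ Real.cos y → K x ≤ K y) {A B : Set ℝ}
    (hA : A ⊆ Set.Ioo (-π) π) (hB : B ⊆ Set.Ioo (-π) π) :
    JE K A B ≤ JE K (symmSet A) (symmSet B) := by
  have hpi := Real.pi_pos
  have h00 := hK0 0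
  have hM : ∀ x, K x ≤ K 0 := fun x => hK _ _ (by simpa using Real.cos_le_one x)
  have fT : ∀ {A : Set ℝ}, A ⊆ Set.Ioo (-π) π → volume A ≠ ⊤ := fun h =>
    ne_top_of_le_ne_top ENNReal.ofReal_ne_top (vol_le_T (h.trans Set.Ioo_subset_Ico_self))
  set C : ℝ := 8 * π ^ 2 + K 0 * (16 * π) + K 0 * (8 * π) with hC
  have hC0 : 0 < C := by positivity
  have main : ∀ δ : ℝ, 0 < δ → JE K A B ≤ JE K (symmSet A) (symmSet B) + ENNReal.ofReal (C * δ) := by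
    intro δ hδ
    have hδ' : ENNReal.ofReal δ ≠ 0 := by simpa using hδ
    have openU : ∀ A : Set ℝ, A ⊆ Set.Ioo (-π) π → ∃ U, A ⊆ U ∧ IsOpen U ∧ U ⊆ Set.Ioo (-π) π ∧
        volume U ≤ volume A + ENNReal.ofReal δ := by
      intro A hA
      obtain ⟨U, h1, h2, h3⟩ := A.exists_isOpen_le_add volume hδ'
      exact ⟨U ∩ Set.Ioo (-π) π, Set.subset_inter h1 hA, h2.inter isOpen_Ioo,
        Set.inter_subset_right, (measure_mono Set.inter_subset_left).trans h3⟩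
    obtain ⟨U, hAU, hUo, hUT, hUv⟩ := openU A hA
    obtain ⟨V, hBV, hVo, hVT, hVv⟩ := openU B hB
    -- mesh
    have huc : UniformContinuousOn K (Set.Icc (-(2 * π)) (2 * π)) :=
      isCompact_Icc.uniformContinuousOn_of_continuous hKc.continuousOn
    obtain ⟨r, hr, hrK⟩ := Metric.uniformContinuousOn_iff.1 huc δ hδ
    have ht : Tendsto (fun N : ℕ => 2 * π / (N : ℝ)) atTop (𝓝 0) :=
      tendsto_const_div_atTop_nhds_zero_nat _
    have hev := (((open_approx hUo hUT hδ'.bot_lt).and (open_approx hVo hVT hδ'.bot_lt)).and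
      ((ht.eventually (gt_mem_nhds (half_pos hr))).and (ht.eventually (gt_mem_nhds hδ)))).and
      (eventually_gt_atTop 0)
    obtain ⟨N, ⟨⟨⟨A', hA', hA'v⟩, ⟨B', hB', hB'v⟩⟩, hNr, hNδ⟩, hN0⟩ := hev.exists
    haveI : NeZero N := ⟨hN0.ne'⟩
    have hmesh : MeshClose K N δ := by
      intro x y hx hy hxy
      have := hrK x (abs_le.1 hx) y (abs_le.1 hy) (by rw [Real.dist_eq]; linarith)
      rw [Real.dist_eq] at this
      exact this.le
    have s1 : JE K A B ≤ JE K U V := JE_mono K hAU hBV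
    have s2 := JE_le hM U (cellU N A') V (cellU N B')
    have s3 := cell_riesz N hKc.measurable hK0 hK hδ.le hmesh hNδ.le A' B'
    have s4 := JE_le hM (symmSet (cellU N A')) (symmSet A) (symmSet (cellU N B')) (symmSet B)
    have star : ∀ {A U W : Set ℝ}, A ⊆ Set.Ioo (-π) π → U ⊆ Set.Ioo (-π) π → W ⊆ U →
        volume U ≤ volume A + ENNReal.ofReal δ →
        volume (symmSet W \ symmSet A) ≤ ENNReal.ofReal δ := by
      intro A U W hA hU hW hv
      refine (vol_annulus (by positivity)).trans (ENNReal.ofReal_le_ofReal ?_)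
      have h1 : (volume W).toReal ≤ (volume A + ENNReal.ofReal δ).toReal :=
        ENNReal.toReal_mono (by simp [fT hA]) ((measure_mono hW).trans hv)
      rw [ENNReal.toReal_add (fT hA) ENNReal.ofReal_ne_top, ENNReal.toReal_ofReal hδ.le] at h1
      linarith
    have hI := @Set.Ioo_subset_Ico_self ℝ _ (-π) π
    have bound : ∀ a b c d : ℝ≥0∞, a ≤ ENNReal.ofReal δ → b ≤ ENNReal.ofReal (2 * π) →
        c ≤ ENNReal.ofReal (2 * π) → d ≤ ENNReal.ofReal δ →
        ENNReal.ofReal (K 0) * (a * b + c * d) ≤ ENNReal.ofReal (K 0 * (4 * π) * δ) := by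
      intro a b c d h1 h2 h3 h4
      calc _ ≤ ENNReal.ofReal (K 0) * (ENNReal.ofReal δ * ENNReal.ofReal (2 * π) +
          ENNReal.ofReal (2 * π) * ENNReal.ofReal δ) := by gcongr
        _ = _ := by
          rw [← ENNReal.ofReal_mul (by positivity), ← ENNReal.ofReal_mul (by positivity),
            ← ENNReal.ofReal_add (by positivity) (by positivity), ← ENNReal.ofReal_mul (hK0 0)]
          congr 1; ring
    have b1 := bound _ _ _ _ hA'v (vol_le_T (hVT.trans hI)) (vol_le_T (cellU_sub N A')) hB'v
    have b2 := bound _ _ _ _ (star hA hUT hA' hUv)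
      (vol_le_T ((symmSet_sub (cellU_sub N B')).trans hI))
      (vol_le_T ((symmSet_sub (hA.trans hI)).trans hI)) (star hB hVT hB' hVv)
    calc JE K A B ≤ _ := s1
      _ ≤ _ := s2
      _ ≤ ((JE K (symmSet A) (symmSet B) + ENNReal.ofReal (K 0 * (4 * π) * δ)) +
          ENNReal.ofReal ((8 * π ^ 2 + K 0 * (16 * π)) * δ)) +
          ENNReal.ofReal (K 0 * (4 * π) * δ) := by
        refine add_le_add (s3.trans (add_le_add (s4.trans (add_le_add le_rfl b2)) le_rfl)) b1
      _ = _ := by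
        rw [add_assoc, add_assoc, ← ENNReal.ofReal_add (by positivity) (by positivity),
          ← ENNReal.ofReal_add (by positivity) (by positivity)]
        congr 2; rw [hC]; ring
  refine ENNReal.le_of_forall_pos_le_add fun ε hε _ => ?_
  have := main (ε / C) (by positivity)
  rwa [mul_div_cancel₀ _ hC0.ne', ENNReal.ofReal_coe_nnreal] at this

end Cont

section Func

lemma K_per {K : ℝ → ℝ} (hK : ∀ x y, Real.cos x ≤ Real.cos y → K x ≤ K y) :
    Function.Periodic K (2 * π) := fun x =>
  le_antisymm (hK _ _ (by rw [Real.cos_add_two_pi])) (hK _ _ (by rw [Real.cos_add_two_pi]))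

lemma K_even {K : ℝ → ℝ} (hK : ∀ x y, Real.cos x ≤ Real.cos y → K x ≤ K y) (x : ℝ) :
    K (-x) = K x :=
  le_antisymm (hK _ _ (by rw [Real.cos_neg])) (hK _ _ (by rw [Real.cos_neg]))

lemma int_T {K : ℝ → ℝ} (hKc : Continuous K) (hK0 : ∀ x, 0 ≤ K x)
    (hK : ∀ x y, Real.cos x ≤ Real.cos y → K x ≤ K y) (x : ℝ) :
    ∫⁻ y in Set.Ioo (-π) π, ENNReal.ofReal (K (x - y)) =
      ENNReal.ofReal (∫ y in (-π)..π, K y) := by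
  have h1 : ∫ y in (-π)..π, K (x - y) = ∫ y in (-π)..π, K y := by
    rw [intervalIntegral.integral_comp_sub_left]
    have := (K_per hK).intervalIntegral_add_eq (x - π) (-π)
    rw [show x - π + 2 * π = x - -π by ring, show -π + 2 * π = π by ring] at this
    exact this
  rw [← h1, intervalIntegral.integral_of_le (by linarith [Real.pi_pos]),
    ofReal_integral_eq_lintegral_ofReal]
  · exact setLIntegral_congr Ioo_ae_eq_Ioc
  · have : Continuous fun y => K (x - y) := by fun_prop
    exact (this.integrableOn_Icc (a := -π) (b := π)).mono_set Set.Ioc_subset_Icc_self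
  · exact Filter.Eventually.of_forall fun y => hK0 _

lemma JE_T {K : ℝ → ℝ} (hKc : Continuous K) (hK0 : ∀ x, 0 ≤ K x)
    (hK : ∀ x y, Real.cos x ≤ Real.cos y → K x ≤ K y) (A : Set ℝ) :
    JE K A (Set.Ioo (-π) π) = ENNReal.ofReal (∫ y in (-π)..π, K y) * volume A := by
  unfold JE
  simp_rw [int_T hKc hK0 hK]
  simp

lemma JE_add_compl {K : ℝ → ℝ} (hKc : Continuous K) (A : Set ℝ) {B : Set ℝ}
    (hBm : MeasurableSet B) (hB : B ⊆ Set.Ioo (-π) π) :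
    JE K A B + JE K A (Set.Ioo (-π) π \ B) = JE K A (Set.Ioo (-π) π) := by
  have hm : Measurable (Function.uncurry fun x y => ENNReal.ofReal (K (x - y))) := by
    have : Continuous K := hKc
    unfold Function.uncurry
    exact ENNReal.measurable_ofReal.comp (by fun_prop : Continuous fun a : ℝ × ℝ => K (a.1 - a.2)).measurable
  unfold JE
  rw [← lintegral_add_left (Measurable.lintegral_prod_right hm)]
  congr 1
  ext x
  conv_rhs => rw [← Set.union_diff_cancel hB]
  rw [lintegral_union (measurableSet_Ioo.diff hBm) Set.disjoint_sdiff_right]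

lemma riesz_compl {K : ℝ → ℝ} (hKc : Continuous K) (hK0 : ∀ x, 0 ≤ K x)
    (hK : ∀ x y, Real.cos x ≤ Real.cos y → K x ≤ K y) {A B : Set ℝ}
    (hA : A ⊆ Set.Ioo (-π) π) (hB : B ⊆ Set.Ioo (-π) π) (hBm : MeasurableSet B) :
    JE K (symmSet A) (Set.Ioo (-π) π \ symmSet B) ≤ JE K A (Set.Ioo (-π) π \ B) := by
  have vA : volume A ≠ ⊤ :=
    ((vol_le_T (hA.trans Set.Ioo_subset_Ico_self)).trans_lt ENNReal.ofReal_lt_top).ne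
  have e1 := JE_add_compl hKc A hBm hB
  have e2 := JE_add_compl hKc (symmSet A) (B := symmSet B) measurableSet_Ioo
    (symmSet_sub (hB.trans Set.Ioo_subset_Ico_self))
  rw [JE_T hKc hK0 hK] at e1 e2
  rw [vol_symmSet vA, ← e1] at e2
  have h := riesz_sets hKc hK0 hK hA hB
  have hfin : JE K (symmSet A) (symmSet B) ≠ ⊤ := by
    intro ht
    rw [ht, e1, top_add] at e2
    exact ENNReal.mul_ne_top ENNReal.ofReal_ne_top vA e2.symm
  by_contra hlt
  push Not at hlt
  have := ENNReal.add_lt_add_of_le_of_lt (ne_top_of_le_ne_top hfin h) h hlt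
  exact absurd e2 this.ne'

lemma level_eq {f : ℝ → ℝ} (hf : Measurable f) {x : ℝ} (hx : x ≠ 0) {s : ℝ} (hs : 0 ≤ s) :
    s < symmRearr f x ↔ x ∈ symmSet {y | y ∈ Set.Ioo (-π) π ∧ s < f y} := by
  set E : ℝ → Set ℝ := fun t => {y | y ∈ Set.Ioo (-π) π ∧ t < f y} with hE
  have hEm : ∀ t, MeasurableSet (E t) := fun t =>
    measurableSet_Ioo.inter (measurableSet_lt measurable_const hf)
  have hET : ∀ t, E t ⊆ Set.Ioo (-π) π := fun t y hy => hy.1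
  have hfin : ∀ t, volume (E t) ≠ ⊤ := fun t =>
    ((vol_le_T ((hET t).trans Set.Ioo_subset_Ico_self)).trans_lt ENNReal.ofReal_lt_top).ne
  have hanti : ∀ t t', t ≤ t' → E t' ⊆ E t := fun t t' h y hy => ⟨hy.1, h.trans_lt hy.2⟩
  have hmem : ∀ t, x ∈ symmSet (E t) ↔ ENNReal.ofReal (2 * |x|) < volume (E t) := by
    intro t
    rw [symmSet, Set.mem_Ioo, ← abs_lt, ENNReal.ofReal_lt_iff_lt_toReal (by positivity) (hfin t)]
    constructor <;> intro h <;> linarith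
  have hdown : ∀ t t', t ≤ t' → x ∈ symmSet (E t') → x ∈ symmSet (E t) := by
    intro t t' h
    rw [hmem, hmem]
    intro h2
    exact h2.trans_le (measure_mono (hanti t t' h))
  set S : Set ℝ := {t | x ∈ symmSet (E t)} with hS
  have hSm : MeasurableSet S := by
    have : S = {t | ENNReal.ofReal (2 * |x|) < volume (E t)} := by ext t; exact hmem t
    rw [this]
    have hv : Antitone fun t => volume (E t) := fun t t' h => measure_mono (hanti t t' h)
    exact measurableSet_lt measurable_const hv.measurable
  have hval : symmRearr f x = (volume (S ∩ Set.Ioi 0)).toReal := by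
    unfold symmRearr
    have : ∀ t, (symmSet {y | y ∈ Set.Ioo (-π) π ∧ t < f y}).indicator (fun _ => (1 : ℝ)) x =
        S.indicator (fun _ => (1 : ℝ)) t := by
      intro t
      by_cases h : x ∈ symmSet (E t)
      · rw [Set.indicator_of_mem h, Set.indicator_of_mem (show t ∈ S from h)]
      · rw [Set.indicator_of_notMem h, Set.indicator_of_notMem (show t ∉ S from h)]
    simp_rw [this]
    rw [integral_indicator_const _ hSm]
    simp [Measure.real, Measure.restrict_apply hSm]
  have hbd : ∃ t0, ∀ t, t0 ≤ t → t ∉ S := by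
    have h0 : Filter.Tendsto (fun n : ℕ => volume (E n)) Filter.atTop (nhds (volume (⋂ n : ℕ, E n))) :=
      tendsto_measure_iInter_atTop (fun n => (hEm n).nullMeasurableSet)
        (fun a b h => hanti _ _ (by exact_mod_cast h)) ⟨0, hfin _⟩
    have he : (⋂ n : ℕ, E n) = ∅ := by
      ext y
      simp only [Set.mem_iInter, Set.mem_empty_iff_false, iff_false, not_forall]
      obtain ⟨n, hn⟩ := exists_nat_gt (f y)
      exact ⟨n, fun h => absurd h.2 (not_lt.2 hn.le)⟩
    rw [he, measure_empty] at h0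
    have hpos : 0 < ENNReal.ofReal (2 * |x|) := ENNReal.ofReal_pos.2 (by positivity)
    obtain ⟨n, hn⟩ := (h0.eventually (gt_mem_nhds hpos)).exists
    refine ⟨n, fun t ht h => ?_⟩
    have := (hmem _).1 (hdown _ _ ht h)
    exact absurd hn (not_lt.2 this.le)
  obtain ⟨t0, ht0⟩ := hbd
  have hSfin : volume (S ∩ Set.Ioi 0) ≠ ⊤ := by
    have : S ∩ Set.Ioi 0 ⊆ Set.Ioo 0 t0 := fun t ht =>
      ⟨ht.2, lt_of_not_ge fun h => ht0 t h ht.1⟩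
    refine ((measure_mono this).trans_lt ?_).ne
    simp
  rw [hval]
  constructor
  · intro h
    by_contra hn
    have : S ∩ Set.Ioi 0 ⊆ Set.Ioo 0 s := fun t ht =>
      ⟨ht.2, lt_of_not_ge fun h => hn (hdown _ _ h ht.1)⟩
    have h2 := ENNReal.toReal_mono (by simp) (measure_mono (μ := volume) this)
    rw [Real.volume_Ioo, ENNReal.toReal_ofReal (by linarith)] at h2
    linarith
  · intro h
    rw [hmem] at h
    have h0 : Filter.Tendsto (fun n : ℕ => volume (E (s + 1 / ((n : ℝ) + 1)))) Filter.atTop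
        (nhds (volume (⋃ n : ℕ, E (s + 1 / ((n : ℝ) + 1))))) := by
      refine tendsto_measure_iUnion_atTop (fun a b h => hanti _ _ ?_)
      gcongr
    have he : (⋃ n : ℕ, E (s + 1 / ((n : ℝ) + 1))) = E s := by
      ext y
      simp only [Set.mem_iUnion]
      constructor
      · rintro ⟨n, hn⟩
        exact hanti _ _ (by have : 0 < 1 / ((n : ℝ) + 1) := by positivity
                            linarith) hn
      · intro hy
        obtain ⟨n, hn⟩ := exists_nat_one_div_lt (sub_pos.2 hy.2)
        exact ⟨n, hy.1, by linarith⟩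
    rw [he] at h0
    obtain ⟨n, hn⟩ := (h0.eventually (lt_mem_nhds h)).exists
    set s' := s + 1 / ((n : ℝ) + 1)
    have hs' : s < s' := by
      have : 0 < 1 / ((n : ℝ) + 1) := by positivity
      simp only [s']; linarith
    have hsub : Set.Ioc 0 s' ⊆ S ∩ Set.Ioi 0 := fun t ht =>
      ⟨hdown _ _ ht.2 ((hmem _).2 hn), ht.1⟩
    have h2 := ENNReal.toReal_mono hSfin (measure_mono (μ := volume) hsub)
    rw [Real.volume_Ioc, ENNReal.toReal_ofReal (by linarith)] at h2
    linarith

lemma symmRearr_nonneg (f : ℝ → ℝ) (x : ℝ) : 0 ≤ symmRearr f x := by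
  unfold symmRearr
  refine integral_nonneg fun t => ?_
  exact Set.indicator_nonneg (fun _ _ => zero_le_one) _

lemma symmRearr_meas {α : Type*} [MeasurableSpace α] {F : ℝ × α → ℝ} (hF : Measurable F) :
    Measurable fun z : ℝ × α => symmRearr (fun t => F (t, z.2)) z.1 := by
  unfold symmRearr
  have hV : Measurable fun q : α × ℝ => volume {y | y ∈ Set.Ioo (-π) π ∧ q.2 < F (y, q.1)} := by
    have hs : MeasurableSet {w : (α × ℝ) × ℝ | w.2 ∈ Set.Ioo (-π) π ∧ w.1.2 < F (w.2, w.1.1)} := by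
      refine MeasurableSet.inter (measurable_snd measurableSet_Ioo) ?_
      exact measurableSet_lt (by fun_prop) (hF.comp (by fun_prop))
    exact measurable_measure_prodMk_left hs
  have hms : MeasurableSet {w : (ℝ × α) × ℝ | w.1.1 ∈ symmSet {y | y ∈ Set.Ioo (-π) π ∧ w.2 < F (y, w.1.2)}} := by
    have hv : Measurable fun w : (ℝ × α) × ℝ =>
        (volume {y | y ∈ Set.Ioo (-π) π ∧ w.2 < F (y, w.1.2)}).toReal / 2 :=
      ((hV.comp (f := fun w : (ℝ × α) × ℝ => (w.1.2, w.2)) (by fun_prop)).ennreal_toReal).div_const 2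
    exact (measurableSet_lt hv.neg (by fun_prop)).inter (measurableSet_lt (by fun_prop) hv)
  have : StronglyMeasurable (Function.uncurry fun (z : ℝ × α) (t : ℝ) =>
      (symmSet {y | y ∈ Set.Ioo (-π) π ∧ t < F (y, z.2)}).indicator (fun _ => (1 : ℝ)) z.1) := by
    have h2 : Measurable ({w : (ℝ × α) × ℝ | w.1.1 ∈ symmSet {y | y ∈ Set.Ioo (-π) π ∧ w.2 < F (y, w.1.2)}}.indicator fun _ => (1 : ℝ)) :=
      measurable_const.indicator hms
    exact h2.stronglyMeasurable
  exact (this.integral_prod_right (ν := volume.restrict (Set.Ioi 0))).measurable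

lemma symmRearr_meas1 {f : ℝ → ℝ} (hf : Measurable f) : Measurable (symmRearr f) := by
  have := symmRearr_meas (α := Unit) (F := fun z => f z.1) (by fun_prop)
  exact this.comp (g := fun z : ℝ × Unit => symmRearr f z.1) (f := fun x : ℝ => (x, ())) (by fun_prop)

end Func

section Layer

lemma nu_exists {p : ℝ} (hp : 1 ≤ p) : ∃ ν : Measure ℝ, SFinite ν ∧ (∀ᵐ τ ∂ν, 0 ≤ τ) ∧
    ∀ r : ℝ, ∫⁻ τ, ENNReal.ofReal (r - τ) ∂ν = ENNReal.ofReal ((max r 0) ^ p) := by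
  rcases hp.eq_or_lt with rfl | hp
  · refine ⟨Measure.dirac 0, inferInstance, ?_, fun r => ?_⟩
    · rw [ae_dirac_iff measurableSet_Ici]
    · rw [lintegral_dirac' _ (by fun_prop)]
      rw [sub_zero, Real.rpow_one]
      rcases le_total r 0 with h | h
      · rw [max_eq_right h, ENNReal.ofReal_of_nonpos h, ENNReal.ofReal_zero]
      · rw [max_eq_left h]
  · have hw : Measurable fun τ : ℝ => ENNReal.ofReal (p * (p - 1) * τ ^ (p - 2)) := by fun_prop
    refine ⟨(volume.restrict (Set.Ioi 0)).withDensity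
      (fun τ => ENNReal.ofReal (p * (p - 1) * τ ^ (p - 2))), inferInstance, ?_, fun r => ?_⟩
    · refine (withDensity_absolutelyContinuous _ _).ae_le ?_
      filter_upwards [ae_restrict_mem measurableSet_Ioi] with τ hτ using le_of_lt hτ
    · rw [lintegral_withDensity_eq_lintegral_mul _ hw (by fun_prop)]
      rcases le_or_gt r 0 with hr | hr
      · rw [max_eq_right hr, Real.zero_rpow (by linarith), ENNReal.ofReal_zero]
        refine (setLIntegral_congr_fun measurableSet_Ioi fun τ (hτ : 0 < τ) => ?_).trans lintegral_zero
        simp only [Pi.mul_apply]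
        rw [ENNReal.ofReal_of_nonpos (p := r - τ) (by linarith), mul_zero]
      · rw [max_eq_left hr.le]
        have h1 : ∫⁻ τ in Set.Ioi 0, ((fun τ => ENNReal.ofReal (p * (p - 1) * τ ^ (p - 2))) *
            fun τ => ENNReal.ofReal (r - τ)) τ =
            ∫⁻ τ in Set.Ioc 0 r, ENNReal.ofReal (p * (p - 1) * τ ^ (p - 2) * (r - τ)) := by
          rw [← Set.Ioc_union_Ioi_eq_Ioi hr.le, lintegral_union measurableSet_Ioi
            (Set.Ioc_disjoint_Ioi le_rfl)]
          have : ∫⁻ τ in Set.Ioi r, ((fun τ => ENNReal.ofReal (p * (p - 1) * τ ^ (p - 2))) *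
            fun τ => ENNReal.ofReal (r - τ)) τ = 0 := by
            refine (setLIntegral_congr_fun measurableSet_Ioi fun τ (hτ : r < τ) => ?_).trans
              lintegral_zero
            simp only [Pi.mul_apply]
            rw [ENNReal.ofReal_of_nonpos (p := r - τ) (by linarith), mul_zero]
          rw [this, add_zero]
          refine setLIntegral_congr_fun measurableSet_Ioc fun τ hτ => ?_
          simp only [Pi.mul_apply]
          have h1 := Real.rpow_nonneg hτ.1.le (p - 2)
          have h2 : 0 ≤ p * (p - 1) := by nlinarith
          rw [ENNReal.ofReal_mul (mul_nonneg h2 h1)]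
        have heq : ∀ τ ∈ Set.Ioc 0 r, p * (p - 1) * τ ^ (p - 2) * (r - τ) =
            p * (p - 1) * r * τ ^ (p - 2) - p * (p - 1) * τ ^ (p - 1) := by
          intro τ hτ
          have : τ ^ (p - 1) = τ ^ (p - 2) * τ := by
            rw [show p - 1 = (p - 2) + 1 by ring, Real.rpow_add_one hτ.1.ne']
          rw [this]; ring
        have i1 : IntervalIntegrable (fun τ : ℝ => p * (p - 1) * r * τ ^ (p - 2)) volume 0 r :=
          (intervalIntegral.intervalIntegrable_rpow' (by linarith)).const_mul _
        have i2 : IntervalIntegrable (fun τ : ℝ => p * (p - 1) * τ ^ (p - 1)) volume 0 r :=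
          (intervalIntegral.intervalIntegrable_rpow' (by linarith)).const_mul _
        have hIntg : ∫ τ in (0 : ℝ)..r, (p * (p - 1) * r * τ ^ (p - 2) - p * (p - 1) * τ ^ (p - 1)) = r ^ p := by
          rw [intervalIntegral.integral_sub i1 i2, intervalIntegral.integral_const_mul,
            intervalIntegral.integral_const_mul, integral_rpow (Or.inl (by linarith)),
            integral_rpow (Or.inl (by linarith)), Real.zero_rpow (by linarith),
            Real.zero_rpow (by linarith)]
          rw [show p - 2 + 1 = p - 1 by ring, show p - 1 + 1 = p by ring]
          have : r ^ p = r ^ (p - 1) * r := by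
            rw [← Real.rpow_add_one hr.ne', sub_add_cancel]
          rw [this]
          have h1 : p - 1 ≠ 0 := by linarith
          have h2 : p ≠ 0 := by linarith
          field_simp
          ring
        rw [h1, ← hIntg, intervalIntegral.integral_of_le hr.le, ofReal_integral_eq_lintegral_ofReal]
        · refine setLIntegral_congr_fun measurableSet_Ioc fun τ hτ => ?_
          rw [heq τ hτ]
        · exact (i1.sub i2).1
        · filter_upwards [ae_restrict_mem measurableSet_Ioc] with τ hτ
          rw [← heq τ hτ]
          have h1 := Real.rpow_nonneg hτ.1.le (p - 2)
          have h2 : 0 ≤ p * (p - 1) := by nlinarith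
          have h3 : 0 ≤ r - τ := by linarith [hτ.2]
          exact mul_nonneg (mul_nonneg h2 h1) h3

/-- one sided energy -/
noncomputable def DD (K : ℝ → ℝ) (p : ℝ) (f g : ℝ → ℝ) : ℝ≥0∞ :=
  ∫⁻ x in Set.Ioo (-π) π, ∫⁻ y in Set.Ioo (-π) π,
    ENNReal.ofReal ((max (f x - g y) 0) ^ p) * ENNReal.ofReal (K (x - y))

lemma DD_eq {K : ℝ → ℝ} (hKc : Continuous K) {p : ℝ} {ν : Measure ℝ} [SFinite ν]
    (hν : ∀ r : ℝ, ∫⁻ τ, ENNReal.ofReal (r - τ) ∂ν = ENNReal.ofReal ((max r 0) ^ p))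
    {f g : ℝ → ℝ} (hf : Measurable f) (hg : Measurable g) :
    DD K p f g = ∫⁻ τ, (∫⁻ s, JE K {x | x ∈ Set.Ioo (-π) π ∧ s + τ < f x}
      {y | y ∈ Set.Ioo (-π) π ∧ g y ≤ s}) ∂ν := by
  set T := Set.Ioo (-π) π with hT
  set μ := volume.restrict T with hμ
  set W : Set ((ℝ × ℝ) × (ℝ × ℝ)) := {w | g w.1.2 ≤ w.2.2 ∧ w.2.2 + w.2.1 < f w.1.1} with hW
  have hWm : MeasurableSet W :=
    MeasurableSet.inter (s₁ := {w : (ℝ × ℝ) × (ℝ × ℝ) | g w.1.2 ≤ w.2.2})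
      (s₂ := {w : (ℝ × ℝ) × (ℝ × ℝ) | w.2.2 + w.2.1 < f w.1.1})
      (measurableSet_le (by fun_prop) (by fun_prop))
      (measurableSet_lt (by fun_prop) (by fun_prop))
  have hKm : Measurable fun z : ℝ × ℝ => ENNReal.ofReal (K (z.1 - z.2)) := by
    have := hKc.measurable
    fun_prop
  set G : (ℝ × ℝ) → (ℝ × ℝ) → ℝ≥0∞ := fun z w =>
    W.indicator (fun _ => 1) (z, w) * ENNReal.ofReal (K (z.1 - z.2)) with hG
  have hGm : Measurable (Function.uncurry G) := by
    have h1 : Measurable (W.indicator (fun _ => (1 : ℝ≥0∞))) := measurable_const.indicator hWm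
    exact h1.mul (hKm.comp measurable_fst)
  have e1 : DD K p f g = ∫⁻ z, ∫⁻ w, G z w ∂(ν.prod volume) ∂(μ.prod μ) := by
    rw [lintegral_prod _ (Measurable.lintegral_prod_right hGm).aemeasurable]
    unfold DD
    refine lintegral_congr fun x => lintegral_congr fun y => ?_
    rw [lintegral_prod (fun w => G (x, y) w) (hGm.comp (f := fun w : ℝ × ℝ => ((x, y), w)) (by fun_prop)).aemeasurable]
    have : ∀ τ, ∫⁻ s, G (x, y) (τ, s) = ENNReal.ofReal (f x - g y - τ) * ENNReal.ofReal (K (x - y)) := by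
      intro τ
      have h2 : ∀ s, G (x, y) (τ, s) = (Set.Ico (g y) (f x - τ)).indicator
          (fun _ => ENNReal.ofReal (K (x - y))) s := by
        intro s
        simp only [hG]
        by_cases h : s ∈ Set.Ico (g y) (f x - τ)
        · have h' : ((x, y), (τ, s)) ∈ W := ⟨h.1, by have := h.2; simp only; linarith⟩
          rw [Set.indicator_of_mem h, Set.indicator_of_mem h', one_mul]
        · have h' : ((x, y), (τ, s)) ∉ W := by
            rintro ⟨h1, h2⟩
            exact h ⟨h1, by simp only at h2; linarith⟩
          rw [Set.indicator_of_notMem h, Set.indicator_of_notMem h', zero_mul]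
      simp_rw [h2]
      rw [lintegral_indicator_const measurableSet_Ico, Real.volume_Ico, mul_comm]
      congr 2
      ring
    simp_rw [this]
    rw [lintegral_mul_const _ (by fun_prop), hν]
  rw [e1, lintegral_lintegral_swap hGm.aemeasurable,
    lintegral_prod _ (Measurable.lintegral_prod_left hGm).aemeasurable]
  refine lintegral_congr fun τ => lintegral_congr fun s => ?_
  rw [lintegral_prod (fun z => G z (τ, s)) (hGm.comp (f := fun z : ℝ × ℝ => (z, (τ, s))) (by fun_prop)).aemeasurable]
  unfold JE
  have hA : MeasurableSet {x | s + τ < f x} := measurableSet_lt measurable_const hf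
  have hB : MeasurableSet {y | g y ≤ s} := measurableSet_le hg measurable_const
  have eA : {x | x ∈ T ∧ s + τ < f x} = {x | s + τ < f x} ∩ T := by ext; simp [and_comm]
  have eB : {y | y ∈ T ∧ g y ≤ s} = {y | g y ≤ s} ∩ T := by ext; simp [and_comm]
  rw [eA, eB, ← Measure.restrict_restrict hA, ← Measure.restrict_restrict hB,
    ← lintegral_indicator hA]
  refine lintegral_congr fun x => ?_
  by_cases hx : x ∈ {x | s + τ < f x}
  · rw [Set.indicator_of_mem hx, ← lintegral_indicator hB]
    refine lintegral_congr fun y => ?_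
    simp only [hG]
    by_cases hy : y ∈ {y | g y ≤ s}
    · have h' : ((x, y), (τ, s)) ∈ W := ⟨hy, hx⟩
      rw [Set.indicator_of_mem hy, Set.indicator_of_mem h', one_mul]
    · have h' : ((x, y), (τ, s)) ∉ W := fun h => hy h.1
      rw [Set.indicator_of_notMem hy, Set.indicator_of_notMem h', zero_mul]
  · rw [Set.indicator_of_notMem hx]
    refine (lintegral_congr fun y => ?_).trans lintegral_zero
    have h' : ((x, y), (τ, s)) ∉ W := fun h => hx h.2
    simp only [hG]
    rw [Set.indicator_of_notMem h', zero_mul]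

lemma JE_congr {K : ℝ → ℝ} {A A' B B' : Set ℝ} (hA : A =ᵐ[volume] A') (hB : B =ᵐ[volume] B') :
    JE K A B = JE K A' B' := by
  unfold JE
  rw [setLIntegral_congr hA]
  refine lintegral_congr fun x => setLIntegral_congr hB

lemma ae_of_ne_zero {A B : Set ℝ} (h : ∀ x, x ≠ 0 → (x ∈ A ↔ x ∈ B)) : A =ᵐ[volume] B := by
  have : ∀ᵐ x : ℝ, x ≠ 0 := by
    simp [ae_iff]
  filter_upwards [this] with x hx
  exact propext (h x hx)

lemma DD_symm_le {K : ℝ → ℝ} (hKc : Continuous K) (hK0 : ∀ x, 0 ≤ K x)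
    (hK : ∀ x y, Real.cos x ≤ Real.cos y → K x ≤ K y) {p : ℝ} (hp : 1 ≤ p)
    {f g : ℝ → ℝ} (hf : Measurable f) (hg : Measurable g) :
    DD K p (symmRearr f) (symmRearr g) ≤ DD K p f g := by
  obtain ⟨ν, hsf, hν0, hν⟩ := nu_exists hp
  rw [DD_eq hKc hν hf hg, DD_eq hKc hν (symmRearr_meas1 hf) (symmRearr_meas1 hg)]
  refine lintegral_mono_ae ?_
  filter_upwards [hν0] with τ hτ
  refine lintegral_mono fun s => ?_
  rcases lt_or_ge s 0 with hs | hs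
  · have : {y | y ∈ Set.Ioo (-π) π ∧ symmRearr g y ≤ s} = ∅ := by
      ext y
      simp only [Set.mem_setOf_eq, Set.mem_empty_iff_false, iff_false, not_and, not_le]
      intro _
      exact hs.trans_le (symmRearr_nonneg g y)
    simp only
    rw [this]
    simp [JE]
  · set A := {x | x ∈ Set.Ioo (-π) π ∧ s + τ < f x} with hA
    set B := {x | x ∈ Set.Ioo (-π) π ∧ s < g x} with hB
    have hAT : A ⊆ Set.Ioo (-π) π := fun x hx => hx.1
    have hBT : B ⊆ Set.Ioo (-π) π := fun x hx => hx.1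
    have hBm : MeasurableSet B := measurableSet_Ioo.inter (measurableSet_lt measurable_const hg)
    have h := riesz_compl hKc hK0 hK hAT hBT hBm
    have e1 : {y | y ∈ Set.Ioo (-π) π ∧ g y ≤ s} = Set.Ioo (-π) π \ B := by
      ext y
      simp only [hB, Set.mem_setOf_eq, Set.mem_diff, not_and, not_lt]
      exact ⟨fun h => ⟨h.1, fun _ => h.2⟩, fun h => ⟨h.1, h.2 h.1⟩⟩
    have e2 : {x | x ∈ Set.Ioo (-π) π ∧ s + τ < symmRearr f x} =ᵐ[volume] symmSet A := by
      refine ae_of_ne_zero fun x hx => ?_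
      simp only [Set.mem_setOf_eq]
      rw [level_eq hf hx (by linarith)]
      exact ⟨fun h => h.2, fun h => ⟨symmSet_sub (hAT.trans Set.Ioo_subset_Ico_self) h, h⟩⟩
    have e3 : {y | y ∈ Set.Ioo (-π) π ∧ symmRearr g y ≤ s} =ᵐ[volume] (Set.Ioo (-π) π \ symmSet B : Set ℝ) := by
      refine ae_of_ne_zero fun x hx => ?_
      simp only [Set.mem_setOf_eq, Set.mem_diff]
      rw [← not_lt, level_eq hg hx hs]
    simp only
    rw [e1, JE_congr e2 e3]
    exact h

/-- two sided energy -/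
noncomputable def EE (K : ℝ → ℝ) (p : ℝ) (f g : ℝ → ℝ) : ℝ≥0∞ :=
  ∫⁻ x in Set.Ioo (-π) π, ∫⁻ y in Set.Ioo (-π) π,
    ENNReal.ofReal (|f x - g y| ^ p) * ENNReal.ofReal (K (x - y))

lemma EE_eq {K : ℝ → ℝ} (hKc : Continuous K)
    (hK : ∀ x y, Real.cos x ≤ Real.cos y → K x ≤ K y) {p : ℝ} (hp : 1 ≤ p)
    {f g : ℝ → ℝ} (hf : Measurable f) (hg : Measurable g) :
    EE K p f g = DD K p f g + DD K p g f := by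
  have hKm := hKc.measurable
  have hm : ∀ {f g : ℝ → ℝ}, Measurable f → Measurable g → Measurable (Function.uncurry fun x y =>
      ENNReal.ofReal ((max (f x - g y) 0) ^ p) * ENNReal.ofReal (K (x - y))) := by
    intro f g hf hg
    unfold Function.uncurry
    fun_prop
  have e : DD K p g f = ∫⁻ x in Set.Ioo (-π) π, ∫⁻ y in Set.Ioo (-π) π,
    ENNReal.ofReal ((max (g y - f x) 0) ^ p) * ENNReal.ofReal (K (x - y)) := by
    unfold DD
    rw [lintegral_lintegral_swap (hm hg hf).aemeasurable]
    refine lintegral_congr fun x => lintegral_congr fun y => ?_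
    rw [← K_even hK, neg_sub]
  rw [e]
  unfold DD EE
  rw [← lintegral_add_left (Measurable.lintegral_prod_right (hm hf hg))]
  refine lintegral_congr fun x => ?_
  have hmx : Measurable fun y => ENNReal.ofReal ((max (f x - g y) 0) ^ p) * ENNReal.ofReal (K (x - y)) := by
    fun_prop
  rw [← lintegral_add_left hmx]
  refine lintegral_congr fun y => ?_
  rw [← add_mul]
  congr 1
  have hp0 : p ≠ 0 := by linarith
  rcases le_total (f x) (g y) with h | h
  · rw [max_eq_right (by linarith : f x - g y ≤ 0), max_eq_left (by linarith : 0 ≤ g y - f x),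
      abs_of_nonpos (by linarith), Real.zero_rpow hp0, ENNReal.ofReal_zero, zero_add, neg_sub]
  · rw [max_eq_left (by linarith : 0 ≤ f x - g y), max_eq_right (by linarith : g y - f x ≤ 0),
      abs_of_nonneg (by linarith), Real.zero_rpow hp0, ENNReal.ofReal_zero, add_zero]

lemma EE_symm_le {K : ℝ → ℝ} (hKc : Continuous K) (hK0 : ∀ x, 0 ≤ K x)
    (hK : ∀ x y, Real.cos x ≤ Real.cos y → K x ≤ K y) {p : ℝ} (hp : 1 ≤ p)
    {f g : ℝ → ℝ} (hf : Measurable f) (hg : Measurable g) :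
    EE K p (symmRearr f) (symmRearr g) ≤ EE K p f g := by
  rw [EE_eq hKc hK hp hf hg, EE_eq hKc hK hp (symmRearr_meas1 hf) (symmRearr_meas1 hg)]
  exact add_le_add (DD_symm_le hKc hK0 hK hp hf hg) (DD_symm_le hKc hK0 hK hp hg hf)

end Layer

section Unfold

lemma lintegral_unfold (h : ℝ → ℝ≥0∞) (hm : Measurable h) :
    ∫⁻ y, h y = ∫⁻ y in Set.Ioo (-π) π, ∑' k : ℤ, h (y + 2 * π * k) := by
  have hpi : 0 < 2 * π := by positivity
  rw [lintegral_tsum fun k => by fun_prop]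
  have hU := iUnion_Ioc_add_zsmul hpi (-π)
  rw [← setLIntegral_univ, ← hU, lintegral_iUnion (fun i => measurableSet_Ioc)
    (Set.pairwise_disjoint_Ioc_add_zsmul _ _)]
  refine tsum_congr fun k => ?_
  rw [setLIntegral_congr Ioo_ae_eq_Ioc, ← lintegral_indicator measurableSet_Ioc,
    ← lintegral_indicator measurableSet_Ioc, ← lintegral_add_right_eq_self _ (2 * π * k)]
  refine lintegral_congr fun y => ?_
  have hiff : y + 2 * π * k ∈ Set.Ioc (-π + k • (2 * π)) (-π + (k + 1) • (2 * π)) ↔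
      y ∈ Set.Ioc (-π) π := by
    simp only [Set.mem_Ioc, zsmul_eq_mul, Int.cast_add, Int.cast_one]
    constructor <;> rintro ⟨h1, h2⟩ <;> constructor <;> linarith
  by_cases hy : y ∈ Set.Ioc (-π) π
  · rw [Set.indicator_of_mem hy, Set.indicator_of_mem (hiff.2 hy)]
  · rw [Set.indicator_of_notMem hy, Set.indicator_of_notMem (fun h => hy (hiff.1 h))]

/-- Gaussian energy -/
noncomputable def QQ (t p : ℝ) (f g : ℝ → ℝ) : ℝ≥0∞ :=
  ∫⁻ x in Set.Ioo (-π) π, ∫⁻ y,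
    ENNReal.ofReal (|f x - g y| ^ p) * ENNReal.ofReal (rexp (-t * (x - y) ^ 2))

lemma QQ_eq {t p : ℝ} (ht : 0 < t) {f g : ℝ → ℝ} (hg : Measurable g)
    (hper : Function.Periodic g (2 * π)) : QQ t p f g = EE (thetaK t) p f g := by
  unfold QQ EE
  refine lintegral_congr fun x => ?_
  rw [lintegral_unfold _ (by fun_prop)]
  refine lintegral_congr fun y => ?_
  have h1 : ∀ k : ℤ, g (y + 2 * π * k) = g y := by
    intro k
    rw [mul_comm]
    exact hper.int_mul k y
  simp_rw [h1]
  rw [ENNReal.tsum_mul_left]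
  congr 1
  have hs := thetaK_hasSum ht (y - x)
  have he : thetaK t (x - y) = thetaK t (y - x) := by
    rw [← neg_sub, K_even fun a b => thetaK_mono ht]
  rw [he, ← hs.tsum_eq, ENNReal.ofReal_tsum_of_nonneg (fun k => (Real.exp_pos _).le) hs.summable]
  refine tsum_congr fun k => ?_
  congr 3
  ring

lemma periodize_T (F : ℝ → ℝ) {x : ℝ} (hx : x ∈ Set.Ioo (-π) π) : periodize F x = F x := by
  have : ⌊(x + π) / (2 * π)⌋ = 0 := by
    rw [Int.floor_eq_zero_iff]
    have := Real.pi_pos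
    constructor
    · have := hx.1; apply div_nonneg <;> linarith
    · rw [div_lt_one (by positivity)]; linarith [hx.2]
  simp [periodize, this]

lemma periodize_per (F : ℝ → ℝ) : Function.Periodic (periodize F) (2 * π) := by
  intro x
  have hpi : 2 * π ≠ 0 := by positivity
  have : (x + 2 * π + π) / (2 * π) = (x + π) / (2 * π) + 1 := by field_simp; ring
  unfold periodize
  rw [this, Int.floor_add_one]
  congr 1
  push_cast
  ring

lemma EE_congr {K : ℝ → ℝ} {p : ℝ} {f g f' g' : ℝ → ℝ}
    (hf : ∀ x ∈ Set.Ioo (-π) π, f x = f' x) (hg : ∀ x ∈ Set.Ioo (-π) π, g x = g' x) :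
    EE K p f g = EE K p f' g' := by
  unfold EE
  refine setLIntegral_congr_fun measurableSet_Ioo fun x hx => ?_
  refine setLIntegral_congr_fun measurableSet_Ioo fun y hy => ?_
  rw [hf x hx, hg y hy]

lemma perRearr_meas1 {f : ℝ → ℝ} (hf : Measurable f) : Measurable (perRearr f) := by
  have := symmRearr_meas1 hf
  unfold perRearr periodize
  fun_prop

theorem QQ_le {t p : ℝ} (ht : 0 < t) (hp : 1 ≤ p) {f g : ℝ → ℝ} (hf : Measurable f)
    (hg : Measurable g) (hper : Function.Periodic g (2 * π)) :
    QQ t p (perRearr fun x => |f x|) (perRearr fun x => |g x|) ≤ QQ t p f g := by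
  rw [QQ_eq ht (perRearr_meas1 (by fun_prop)) (periodize_per _), QQ_eq ht hg hper]
  rw [EE_congr (f := perRearr fun x => |f x|) (g := perRearr fun x => |g x|) (f' := symmRearr fun x => |f x|) (g' := symmRearr fun x => |g x|)
    (fun x hx => periodize_T _ hx) (fun x hx => periodize_T _ hx)]
  refine (EE_symm_le (thetaK_continuous ht) (thetaK_nonneg ht) (fun a b => thetaK_mono ht) hp
    (by fun_prop) (by fun_prop)).trans ?_
  unfold EE
  refine lintegral_mono fun x => lintegral_mono fun y => ?_
  refine mul_le_mul_left (ENNReal.ofReal_le_ofReal ?_) _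
  exact Real.rpow_le_rpow (abs_nonneg _) (abs_abs_sub_abs_le (f x) (g y)) (by linarith)

end Unfold

section Assembly

lemma five_swap {A B C : Type*} [MeasurableSpace A] [MeasurableSpace B] [MeasurableSpace C]
    (μ ν : Measure A) (ρ : Measure B) (σ : Measure C) [SFinite μ] [SFinite ν] [SFinite ρ] [SFinite σ]
    (H : (A × B) → (A × B) → C → ℝ≥0∞)
    (hH : Measurable fun w : ((A × B) × (A × B)) × C => H w.1.1 w.1.2 w.2) :
    ∫⁻ x, ∫⁻ y, ∫⁻ τ, H x y τ ∂σ ∂(ν.prod ρ) ∂(μ.prod ρ) =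
      ∫⁻ x', ∫⁻ y', ∫⁻ τ, ∫⁻ x, ∫⁻ y, H (x, x') (y, y') τ ∂ν ∂μ ∂σ ∂ρ ∂ρ := by
  have h1 : Measurable fun w : (A × B) × (A × B) => ∫⁻ τ, H w.1 w.2 τ ∂σ :=
    Measurable.lintegral_prod_right' hH
  have h2 : Measurable fun x : A × B => ∫⁻ y, ∫⁻ τ, H x y τ ∂σ ∂(ν.prod ρ) :=
    Measurable.lintegral_prod_right' h1
  rw [lintegral_prod_symm _ h2.aemeasurable]
  refine lintegral_congr fun x' => ?_
  have h3 : ∀ x, ∫⁻ y, ∫⁻ τ, H (x, x') y τ ∂σ ∂(ν.prod ρ) =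
      ∫⁻ y', ∫⁻ y, ∫⁻ τ, H (x, x') (y, y') τ ∂σ ∂ν ∂ρ := by
    intro x
    have : Measurable fun y : A × B => ∫⁻ τ, H (x, x') y τ ∂σ :=
      h1.comp (measurable_prodMk_left (x := ((x, x') : A × B)))
    rw [lintegral_prod_symm _ this.aemeasurable]
  simp_rw [h3]
  have h4 : Measurable fun q : A × B => ∫⁻ y, ∫⁻ τ, H (q.1, x') (y, q.2) τ ∂σ ∂ν := by
    refine Measurable.lintegral_prod_right' (f := fun q : (A × B) × A => ∫⁻ τ, H (q.1.1, x') (q.2, q.1.2) τ ∂σ) ?_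
    exact h1.comp (f := fun q : (A × B) × A => ((q.1.1, x'), (q.2, q.1.2))) (by fun_prop)
  rw [lintegral_lintegral_swap (f := fun x y' => ∫⁻ y, ∫⁻ τ, H (x, x') (y, y') τ ∂σ ∂ν) h4.aemeasurable]
  refine lintegral_congr fun y' => ?_
  have h5 : ∀ x, ∫⁻ y, ∫⁻ τ, H (x, x') (y, y') τ ∂σ ∂ν = ∫⁻ τ, ∫⁻ y, H (x, x') (y, y') τ ∂ν ∂σ := by
    intro x
    refine lintegral_lintegral_swap (f := fun y τ => H (x, x') (y, y') τ) ?_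
    exact (hH.comp (f := fun q : A × C => (((x, x'), (q.1, y')), q.2)) (by fun_prop)).aemeasurable
  simp_rw [h5]
  refine lintegral_lintegral_swap (f := fun x τ => ∫⁻ y, H (x, x') (y, y') τ ∂ν) ?_
  have : Measurable fun q : (A × C) × A => H (q.1.1, x') (q.2, y') q.1.2 :=
    hH.comp (f := fun q : (A × C) × A => (((q.1.1, x'), (q.2, y')), q.1.2)) (by fun_prop)
  exact (Measurable.lintegral_prod_right' this).aemeasurable

lemma gamma_id {q a ρ : ℝ} (hq : 0 < q) (ha : 0 ≤ a) (hρ : 0 ≤ ρ) (h0 : ρ = 0 → a = 0) :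
    ENNReal.ofReal (a / Real.sqrt ρ ^ q) = ∫⁻ τ in Set.Ioi (0 : ℝ),
      ENNReal.ofReal (1 / Real.Gamma (q / 2) * τ ^ (q / 2 - 1)) *
        (ENNReal.ofReal a * ENNReal.ofReal (rexp (-τ * ρ))) := by
  rcases hρ.eq_or_lt with h | h
  · rw [h0 h.symm]
    simp
  have hq2 : 0 < q / 2 := by linarith
  have hG := Real.Gamma_pos_of_pos hq2
  have hI := Real.integral_rpow_mul_exp_neg_mul_Ioi hq2 h
  have hIntg : Integrable (fun t : ℝ => t ^ (q / 2 - 1) * rexp (-(ρ * t))) (volume.restrict (Set.Ioi 0)) := by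
    by_contra hn
    rw [integral_undef hn] at hI
    have : 0 < (1 / ρ) ^ (q / 2) * Real.Gamma (q / 2) := by positivity
    linarith
  have hs : Real.sqrt ρ ^ q = ρ ^ (q / 2) := by
    rw [Real.sqrt_eq_rpow, ← Real.rpow_mul hρ]
    congr 1; ring
  have e : a / Real.sqrt ρ ^ q = ∫ t in Set.Ioi (0 : ℝ), (a / Real.Gamma (q / 2)) * (t ^ (q / 2 - 1) * rexp (-(ρ * t))) := by
    rw [integral_const_mul, hI, hs, one_div, Real.inv_rpow hρ]
    field_simp
  rw [e, ofReal_integral_eq_lintegral_ofReal (hIntg.const_mul _)]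
  · refine setLIntegral_congr_fun measurableSet_Ioi fun τ (hτ : 0 < τ) => ?_
    rw [← ENNReal.ofReal_mul ha, ← ENNReal.ofReal_mul (by positivity)]
    congr 1
    rw [show -τ * ρ = -(ρ * τ) by ring]
    ring
  · filter_upwards [ae_restrict_mem measurableSet_Ioi] with τ hτ
    have : (0 : ℝ) < τ := hτ
    simp only [Pi.zero_apply]
    positivity

lemma gagP_eq {m : ℕ} {s p : ℝ} (hs0 : 0 < s) (hp : 1 ≤ p)
    {v : ℝ × EuclideanSpace ℝ (Fin m) → ℝ} (hv : Measurable v) :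
    gagP m s p v = ∫⁻ x' : EuclideanSpace ℝ (Fin m), ∫⁻ y' : EuclideanSpace ℝ (Fin m),
      ∫⁻ τ in Set.Ioi (0 : ℝ),
        (ENNReal.ofReal (1 / Real.Gamma (((m : ℝ) + 1 + s * p) / 2) * τ ^ (((m : ℝ) + 1 + s * p) / 2 - 1)) *
          ENNReal.ofReal (rexp (-τ * ‖x' - y'‖ ^ 2))) *
        QQ τ p (fun t => v (t, x')) (fun t => v (t, y')) := by
  have hq : 0 < (m : ℝ) + 1 + s * p := by
    have : 0 < s * p := by apply mul_pos <;> linarith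
    positivity
  unfold gagP
  set q := (m : ℝ) + 1 + s * p with hqdef
  have hp0 : p ≠ 0 := by linarith
  have hstrip : volume.restrict {x : ℝ × EuclideanSpace ℝ (Fin m) | x.1 ∈ Set.Ioo (-π) π} =
      (volume.restrict (Set.Ioo (-π) π)).prod volume := by
    have : {x : ℝ × EuclideanSpace ℝ (Fin m) | x.1 ∈ Set.Ioo (-π) π} =
        Set.Ioo (-π) π ×ˢ Set.univ := by ext; simp
    rw [this, Measure.volume_eq_prod, ← Measure.prod_restrict, Measure.restrict_univ]
  rw [hstrip]
  have e1 : ∀ x y : ℝ × EuclideanSpace ℝ (Fin m),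
      ENNReal.ofReal (|v x - v y| ^ p / Real.sqrt ((x.1 - y.1) ^ 2 + ‖x.2 - y.2‖ ^ 2) ^ q) =
      ∫⁻ τ in Set.Ioi (0 : ℝ), ENNReal.ofReal (1 / Real.Gamma (q / 2) * τ ^ (q / 2 - 1)) *
        (ENNReal.ofReal (|v x - v y| ^ p) *
          ENNReal.ofReal (rexp (-τ * ((x.1 - y.1) ^ 2 + ‖x.2 - y.2‖ ^ 2)))) := by
    intro x y
    refine gamma_id hq (by positivity) (by positivity) fun h => ?_
    have h1 : x.1 - y.1 = 0 := by nlinarith [sq_nonneg (x.1 - y.1), sq_nonneg ‖x.2 - y.2‖]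
    have h2 : ‖x.2 - y.2‖ = 0 := by nlinarith [sq_nonneg (x.1 - y.1), sq_nonneg ‖x.2 - y.2‖]
    have : x = y := Prod.ext (sub_eq_zero.1 h1) (sub_eq_zero.1 (norm_eq_zero.1 h2))
    rw [this, sub_self, abs_zero, Real.zero_rpow hp0]
  simp_rw [e1]
  rw [Measure.volume_eq_prod, five_swap]
  · refine lintegral_congr fun x' => lintegral_congr fun y' => ?_
    refine lintegral_congr fun τ => ?_
    unfold QQ
    have hm1 : ∀ x, Measurable fun y => ENNReal.ofReal (|v (x, x') - v (y, y')| ^ p) *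
        ENNReal.ofReal (rexp (-τ * (x - y) ^ 2)) := by
      intro x
      fun_prop
    have hm2 : Measurable fun x => ∫⁻ y, ENNReal.ofReal (|v (x, x') - v (y, y')| ^ p) *
        ENNReal.ofReal (rexp (-τ * (x - y) ^ 2)) := by
      refine Measurable.lintegral_prod_right' (f := fun z : ℝ × ℝ => ENNReal.ofReal (|v (z.1, x') - v (z.2, y')| ^ p) *
        ENNReal.ofReal (rexp (-τ * (z.1 - z.2) ^ 2))) ?_
      fun_prop
    rw [← lintegral_const_mul _ hm2]
    refine lintegral_congr fun x => ?_
    rw [← lintegral_const_mul _ (hm1 x)]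
    refine lintegral_congr fun y => ?_
    simp only
    rw [mul_add, Real.exp_add, ENNReal.ofReal_mul (Real.exp_pos _).le]
    ring
  · fun_prop

lemma perRearr1_meas {m : ℕ} {u : ℝ × EuclideanSpace ℝ (Fin m) → ℝ} (hu : Measurable u) :
    Measurable (perRearr1 m u) := by
  have h := symmRearr_meas (F := fun z => |u z|) (by fun_prop)
  unfold perRearr1 perRearr periodize
  exact h.comp (f := fun x : ℝ × EuclideanSpace ℝ (Fin m) =>
    (x.1 - 2 * π * (⌊(x.1 + π) / (2 * π)⌋ : ℝ), x.2)) (by fun_prop)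

end Assembly

theorem stmt_6 (m : ℕ) (s p : ℝ) (hs0 : 0 < s) (hs1 : s < 1) (hp : 1 ≤ p)
    (u : ℝ × EuclideanSpace ℝ (Fin m) → ℝ) (hu : Measurable u)
    (huper : ∀ x : ℝ × EuclideanSpace ℝ (Fin m), u (x.1 + 2 * π, x.2) = u x)
    (hfin : gagP m s p u ≠ ⊤) :
    gagSeminorm m s p (perRearr1 m u) ≤ gagSeminorm m s p u := by
  unfold gagSeminorm
  refine ENNReal.rpow_le_rpow ?_ (by positivity)
  have hr := perRearr1_meas hu
  rw [gagP_eq hs0 hp hu, gagP_eq hs0 hp hr]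
  refine lintegral_mono fun x' => lintegral_mono fun y' => ?_
  refine setLIntegral_mono' measurableSet_Ioi fun τ hτ => ?_
  have h := QQ_le (f := fun t => u (t, x')) (g := fun t => u (t, y')) hτ hp (by fun_prop)
    (by fun_prop) (fun t => huper (t, y'))
  exact mul_le_mul_right h _
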